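/- arXiv:2604.21703 — 6 statements merged into one kernel-verified Lean document; each statement's English description precedes it below -/
import Mathlib

section
/- Let F be a finite field of odd cardinality q, V a finite-dimensional F-vector space, Q a nondegenerate symmetric bilinear form on V, and ψ : F → ℂ a nontrivial additive character. Then the Weil index γ_ψ(V,Q) = q^{-dim V/2} ∑_{x ∈ V} ψ(Q(x,x)/2) is a fourth root of unity, i.e. γ_ψ(V,Q)^4 = 1. -/
/-!
Write `G(q) = ∑ x, ψ (q x)` for a quadratic form `q` on `V`. Substituting `x = u + y` in the double
sum `G(q) G(-q)` turns the inner sum over `y` into a sum of the character `ψ (polar q u ·)`, which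
vanishes unless `u = 0`; hence `G(q) G(-q) = |V|`. On the other hand `-1 = a² + b²` in a finite
field, so `(x, y) ↦ (a x + b y, a y - b x)` is an isometry from `(-q) ⊕ (-q)` to `q ⊕ q`, and
`G(-q)² = G(q)²`. Together, `G(q)⁴ = |V|²`.
-/

open Finset

/-- The Weil index `γ_ψ(V,Q) = q^{-dim V/2} ∑_{x ∈ V} ψ(Q(x,x)/2)`. -/
noncomputable def weilIndex {F V : Type*} [Field F] [Fintype F]
    [AddCommGroup V] [Module F V] [Fintype V]
    (ψ : AddChar F ℂ) (Q : LinearMap.BilinForm F V) : ℂ :=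
  ((Real.sqrt (Fintype.card F) : ℂ))⁻¹ ^ Module.finrank F V * ∑ x : V, ψ (Q x x / 2)

section QuadraticMap

variable {R M N : Type*} [CommRing R] [AddCommGroup M] [Module R M] [AddCommGroup N] [Module R N]

theorem map_smul_add_smul_add_map_smul_sub_smul (q : QuadraticMap R M N) (a b : R) (x y : M) :
    q (a • x + b • y) + q (a • y - b • x) = (a ^ 2 + b ^ 2) • (q x + q y) := by
  rw [sub_eq_add_neg, ← neg_smul]
  simp only [QuadraticMap.map_add q, QuadraticMap.map_smul, QuadraticMap.polar_smul_left,
    QuadraticMap.polar_smul_right, QuadraticMap.polar_comm q y x]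
  module

theorem equivalent_prod_self_sq_add_sq_smul (q : QuadraticMap R M N) {a b : R}
    (hab : IsUnit (a ^ 2 + b ^ 2)) :
    (((a ^ 2 + b ^ 2) • q).prod ((a ^ 2 + b ^ 2) • q)).Equivalent (q.prod q) := by
  obtain ⟨d, hd⟩ := hab.exists_right_inv
  refine ⟨{ toFun x := (a • x.1 + b • x.2, a • x.2 - b • x.1)
            invFun x := (d • (a • x.1 - b • x.2), d • (a • x.2 + b • x.1))
            map_add' := fun x y ↦ by ext <;> dsimp <;> module
            map_smul' := fun r x ↦ by ext <;> dsimp <;> module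
            left_inv := fun x ↦ ?_
            right_inv := fun x ↦ ?_
            map_app' := fun x ↦ ?_ }⟩
  · ext
    · linear_combination (norm := (dsimp; module)) hd • x.1
    · linear_combination (norm := (dsimp; module)) hd • x.2
  · ext
    · linear_combination (norm := (dsimp; module)) hd • x.1
    · linear_combination (norm := (dsimp; module)) hd • x.2
  · exact (map_smul_add_smul_add_map_smul_sub_smul q a b x.1 x.2).trans (smul_add _ _ _)

theorem polarBilin_invOf_two_smul_toQuadraticMap [Invertible (2 : R)]
    {B : LinearMap.BilinForm R M} (hB : B.IsSymm) :
    ((⅟2 : R) • B.toQuadraticMap).polarBilin = B := by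
  ext x y
  simp only [QuadraticMap.polarBilin_apply_apply, FunLike.coe_smul, QuadraticMap.polar_smul,
    LinearMap.BilinMap.polar_toQuadraticMap, hB.eq y x, smul_eq_mul]
  rw [← two_mul, invOf_mul_cancel_left]

end QuadraticMap

section GaussSum

variable {R M M' S : Type*} [CommRing R] [AddCommGroup M] [Module R M] [Fintype M]
  [AddCommGroup M'] [Module R M'] [Fintype M'] [CommSemiring S]

/-- The Gauss sum `∑ x, ψ (q x)` of a quadratic form `q` on a finite module, with respect to an
additive character `ψ` of the base ring. -/
def quadraticGaussSum (ψ : AddChar R S) (q : QuadraticForm R M) : S :=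
  ∑ x, ψ (q x)

theorem quadraticGaussSum_congr (ψ : AddChar R S) {q : QuadraticForm R M}
    {q' : QuadraticForm R M'} (h : q.Equivalent q') :
    quadraticGaussSum ψ q = quadraticGaussSum ψ q' := by
  obtain ⟨e⟩ := h
  exact Fintype.sum_equiv e.toEquiv _ _ fun x ↦ congrArg ψ (e.map_app x).symm

theorem quadraticGaussSum_prod (ψ : AddChar R S) (q : QuadraticForm R M)
    (q' : QuadraticForm R M') :
    quadraticGaussSum ψ (q.prod q') = quadraticGaussSum ψ q * quadraticGaussSum ψ q' := by
  simp only [quadraticGaussSum, QuadraticMap.prod_apply, AddChar.map_add_eq_mul,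
    Fintype.sum_mul_sum, Fintype.sum_prod_type]

theorem quadraticGaussSum_sq_add_sq_smul_sq (ψ : AddChar R S) (q : QuadraticForm R M)
    {a b : R} (hab : IsUnit (a ^ 2 + b ^ 2)) :
    quadraticGaussSum ψ ((a ^ 2 + b ^ 2) • q) ^ 2 = quadraticGaussSum ψ q ^ 2 := by
  simpa only [sq, quadraticGaussSum_prod] using
    quadraticGaussSum_congr ψ (equivalent_prod_self_sq_add_sq_smul q hab)

variable [IsDomain S] {ψ : AddChar R S}

theorem sum_addChar_linearMap_eq_zero (hψ : ψ.IsPrimitive) {f : M →ₗ[R] R} (hf : f ≠ 0) :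
    ∑ x, ψ (f x) = 0 := by
  classical
  obtain ⟨x, hx⟩ := DFunLike.ne_iff.mp hf
  obtain ⟨r, hr⟩ := AddChar.ne_one_iff.mp (hψ hx)
  have hne : ψ.compAddMonoidHom f.toAddMonoidHom ≠ 0 :=
    AddChar.ne_one_iff.mpr ⟨r • x, by simpa [mul_comm] using hr⟩
  exact (AddChar.sum_eq_ite _).trans (if_neg hne)

theorem quadraticGaussSum_mul_quadraticGaussSum_neg (hψ : ψ.IsPrimitive)
    {q : QuadraticForm R M} (hq : q.polarBilin.SeparatingLeft) :
    quadraticGaussSum ψ q * quadraticGaussSum ψ (-q) = Fintype.card M := by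
  have shift (u y : M) : ψ (q (u + y)) * ψ (-q y) = ψ (q u) * ψ (q.polarBilin u y) := by
    simp only [← AddChar.map_add_eq_mul, QuadraticMap.map_add, QuadraticMap.polarBilin_apply_apply]
    congr 1
    ring
  calc quadraticGaussSum ψ q * quadraticGaussSum ψ (-q)
      = ∑ y, ∑ x, ψ (q x) * ψ (-q y) := by
        simp only [quadraticGaussSum, neg_apply, sum_mul_sum]
        exact sum_comm
    _ = ∑ y, ∑ u, ψ (q u) * ψ (q.polarBilin u y) := by
        refine sum_congr rfl fun y _ ↦ ?_
        simp only [← shift]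
        exact (Equiv.sum_comp (Equiv.addRight y) fun x ↦ ψ (q x) * ψ (-q y)).symm
    _ = ∑ u, ψ (q u) * ∑ y, ψ (q.polarBilin u y) := by
        rw [sum_comm]
        simp only [mul_sum]
    _ = ψ (q 0) * ∑ y, ψ (q.polarBilin 0 y) := by
        refine Fintype.sum_eq_single 0 fun u hu ↦ ?_
        have hpolar : q.polarBilin u ≠ 0 :=
          mt (LinearMap.separatingLeft_iff_linear_nontrivial.mp hq u) hu
        rw [sum_addChar_linearMap_eq_zero hψ hpolar, mul_zero]
    _ = Fintype.card M := by simp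

theorem quadraticGaussSum_pow_four (hψ : ψ.IsPrimitive) {q : QuadraticForm R M}
    (hq : q.polarBilin.SeparatingLeft) {a b : R} (hab : a ^ 2 + b ^ 2 = -1) :
    quadraticGaussSum ψ q ^ 4 = (Fintype.card M : S) ^ 2 := by
  have hneg : quadraticGaussSum ψ (-q) ^ 2 = quadraticGaussSum ψ q ^ 2 := by
    have hunit : IsUnit (a ^ 2 + b ^ 2) := hab ▸ isUnit_one.neg
    have hsq := quadraticGaussSum_sq_add_sq_smul_sq ψ q hunit
    rwa [hab, neg_one_smul R q] at hsq
  calc quadraticGaussSum ψ q ^ 4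
      = quadraticGaussSum ψ q ^ 2 * quadraticGaussSum ψ (-q) ^ 2 := by rw [hneg, ← pow_add]
    _ = (Fintype.card M : S) ^ 2 := by
        rw [← mul_pow, quadraticGaussSum_mul_quadraticGaussSum_neg hψ hq]

end GaussSum

section FiniteField

variable {F V : Type*} [Field F] [Fintype F] [AddCommGroup V] [Module F V] [Fintype V]

theorem two_ne_zero_of_odd_card (hF : Odd (Fintype.card F)) : (2 : F) ≠ 0 :=
  Ring.two_ne_zero fun h ↦
    Nat.not_even_iff_odd.mpr hF (Nat.even_iff.mpr (FiniteField.even_card_of_char_two h))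

theorem exists_sq_add_sq_eq_neg_one (R : Type*) [Ring R] [IsDomain R] [Finite R] :
    ∃ a b : R, a ^ 2 + b ^ 2 = -1 := by
  have : NeZero (ringChar R) := ⟨CharP.ringChar_ne_zero_of_finite R⟩
  obtain ⟨a, b, hab⟩ := CharP.sq_add_sq R (ringChar R) (-1)
  exact ⟨a, b, by simpa using hab⟩

theorem weilIndex_pow_four_eq_quadraticGaussSum (ψ : AddChar F ℂ) (Q : LinearMap.BilinForm F V) :
    weilIndex ψ Q ^ 4 =
      quadraticGaussSum ψ ((2⁻¹ : F) • Q.toQuadraticMap) ^ 4 / (Fintype.card V : ℂ) ^ 2 := by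
  have hsqrt : (Real.sqrt (Fintype.card F) : ℂ) ^ 2 = Fintype.card F := by
    rw [← Complex.ofReal_pow, Real.sq_sqrt (Nat.cast_nonneg _), Complex.ofReal_natCast]
  have hsum : ∑ x, ψ (Q x x / 2) = quadraticGaussSum ψ ((2⁻¹ : F) • Q.toQuadraticMap) :=
    sum_congr rfl fun x _ ↦ congrArg ψ (div_eq_inv_mul _ _)
  rw [weilIndex, hsum, Module.card_eq_pow_finrank (K := F) (V := V), Nat.cast_pow, ← hsqrt]
  ring

end FiniteField

/-- The Weil index is a fourth root of unity. -/
theorem weilIndex_pow_four {F V : Type*} [Field F] [Fintype F]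
    [AddCommGroup V] [Module F V] [Fintype V]
    (hq : Odd (Fintype.card F))
    (Q : LinearMap.BilinForm F V)
    (hsymm : ∀ x y : V, Q x y = Q y x)
    (hnd : LinearMap.BilinForm.Nondegenerate Q)
    (ψ : AddChar F ℂ) (hψ : ψ ≠ 1) :
    weilIndex ψ Q ^ 4 = 1 := by
  have hpolar : ((2⁻¹ : F) • Q.toQuadraticMap).polarBilin.SeparatingLeft := by
    have : Invertible (2 : F) := invertibleOfNonzero (two_ne_zero_of_odd_card hq)
    rw [← invOf_eq_inv, polarBilin_invOf_two_smul_toQuadraticMap ⟨hsymm⟩]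
    exact hnd.1
  obtain ⟨a, b, hab⟩ := exists_sq_add_sq_eq_neg_one F
  have hcard : (Fintype.card V : ℂ) ≠ 0 := Nat.cast_ne_zero.mpr Fintype.card_ne_zero
  rw [weilIndex_pow_four_eq_quadraticGaussSum,
    quadraticGaussSum_pow_four (AddChar.IsPrimitive.of_ne_one hψ) hpolar hab,
    div_self (pow_ne_zero 2 hcard)]
end

section
/- Let F be a finite field of odd cardinality q with algebraic closure K, and ψ : F → ℂ a nontrivial additive character. For a symmetric invertible matrix N ∈ M_n(F) set γ_ψ(N) = q^{-n/2} ∑_{v ∈ F^n} ψ((vᵗ N v)/2). Let M, M' ∈ M_n(F) be symmetric invertible matrices, A ∈ GL_n(K), and s ∈ M_n(F) such that: (i) the entrywise Frobenius Fr(A) (raising each entry to the q-th power) satisfies Fr(A) = A · s (with s viewed in M_n(K)); (ii) sᵗ M s = M; (iii) Aᵗ M A = M' (with M, M' viewed in M_n(K)). Then det(s) = ±1 in F, and γ_ψ(M') = γ_ψ(M) if det(s) = 1, while γ_ψ(M') = −γ_ψ(M) if det(s) = −1. -/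
/-!
Diagonalising `N` over `F` and evaluating the one-variable quadratic Gauss sums shows that the Weil
index depends on `N` only through its size and the quadratic character `χ` of its determinant:
`γ_ψ(N) = χ(det N) γ_ψ(1)ⁿ`, where `γ_ψ(1)` is the index of `x²` in one variable.

For the twist, `b = det A · det M` is a square root in `K` of `det M · det M'`, and `Fr(A) = A s`
gives `b^q = b · det s`. By Euler's criterion `b^(q-1) = (b²)^((q-1)/2) = χ(b²)`, so
`det s = χ(det M · det M')`, which is exactly the ratio of the two Weil indices.
-/

open Finset Matrix

/-- The Weil index of a symmetric invertible matrix `N` over a finite field: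
`γ_ψ(N) = q^{-n/2} ∑_{v ∈ F^n} ψ((vᵗ N v)/2)`. -/
noncomputable def weilIndexMat {F : Type*} [Field F] [Fintype F] {n : ℕ}
    (ψ : AddChar F ℂ) (N : Matrix (Fin n) (Fin n) F) : ℂ :=
  ((Real.sqrt (Fintype.card F) : ℂ))⁻¹ ^ n * ∑ v : Fin n → F, ψ (v ⬝ᵥ (N *ᵥ v) / 2)

section MatrixGaussSum

variable {ι R C : Type*} [Fintype ι] [DecidableEq ι] [CommSemiring R] [Fintype R]
  [CommSemiring C]

/-- The Gauss sum of the quadratic form `v ↦ vᵗ N v`, without the factor `1/2` and the normalisation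
of `weilIndexMat`. -/
def matrixGaussSum (ψ : AddChar R C) (N : Matrix ι ι R) : C :=
  ∑ v : ι → R, ψ (v ⬝ᵥ N *ᵥ v)

lemma matrixGaussSum_transpose_mul_mul (ψ : AddChar R C) (N : Matrix ι ι R) {P : Matrix ι ι R}
    (hP : IsUnit P) : matrixGaussSum ψ (Pᵀ * N * P) = matrixGaussSum ψ N := by
  have hbij : Function.Bijective P.mulVec :=
    Finite.injective_iff_bijective.1 (mulVec_injective_of_isUnit hP)
  refine Fintype.sum_bijective _ hbij _ _ fun v => ?_
  rw [← mulVec_mulVec, ← mulVec_mulVec, dotProduct_mulVec v Pᵀ, vecMul_transpose]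

lemma matrixGaussSum_diagonal (ψ : AddChar R C) (d : ι → R) :
    matrixGaussSum ψ (diagonal d) = ∏ i, ∑ x, ψ (d i * x ^ 2) := by
  rw [prod_univ_sum, Fintype.piFinset_univ]
  refine sum_congr rfl fun v _ => ?_
  have hsum : v ⬝ᵥ diagonal d *ᵥ v = ∑ i, d i * v i ^ 2 := by
    simp only [dotProduct, mulVec_diagonal]
    exact sum_congr rfl fun i _ => by ring
  rw [hsum]
  exact map_prod ψ.toMonoidHom (fun i => Multiplicative.ofAdd (d i * v i ^ 2)) univ

end MatrixGaussSum

lemma exists_transpose_mul_mul_eq_diagonal {ι k : Type*} [Fintype ι] [DecidableEq ι] [Field k]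
    [Invertible (2 : k)] {N : Matrix ι ι k} (hN : N.IsSymm) :
    ∃ (P : Matrix ι ι k) (d : ι → k), IsUnit P ∧ Pᵀ * N * P = diagonal d := by
  have hsymm : LinearMap.IsSymm (toBilin' N) :=
    LinearMap.BilinForm.isSymm_iff.1 (isSymm_toBilin'_iff_isSymm.2 hN)
  obtain ⟨v, hv⟩ := LinearMap.BilinForm.exists_orthogonal_basis hsymm
  let b := v.reindex (Fintype.equivOfCardEq (by simp) : Fin (Module.finrank k (ι → k)) ≃ ι)
  have := (Pi.basisFun k ι).invertibleToMatrix b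
  refine ⟨(Pi.basisFun k ι).toMatrix b, fun i => toBilin' N (b i) (b i), isUnit_of_invertible _, ?_⟩
  have hgram := LinearMap.BilinForm.toMatrix_mul_basis_toMatrix (Pi.basisFun k ι) b (toBilin' N)
  rw [LinearMap.BilinForm.toMatrix_basisFun, LinearMap.BilinForm.toMatrix'_toBilin'] at hgram
  rw [hgram]
  ext i j
  rw [LinearMap.BilinForm.toMatrix_apply]
  obtain rfl | hij := eq_or_ne i j
  · rw [diagonal_apply_eq]
  · rw [diagonal_apply_ne _ hij]
    simp only [b, Module.Basis.reindex_apply]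
    exact hv (by simpa using hij)

lemma isSymm_of_transpose_mul_map_mul_eq {ι R S : Type*} [Fintype ι] [CommSemiring S]
    {f : R → S} (hf : f.Injective) {M M' : Matrix ι ι R} {A : Matrix ι ι S} (hM : M.IsSymm)
    (hAM : Aᵀ * M.map f * A = M'.map f) : M'.IsSymm := by
  rw [← isSymm_map_iff hf, ← hAM, IsSymm, transpose_mul, transpose_mul, transpose_transpose,
    (hM.map f).eq, Matrix.mul_assoc]

lemma isUnit_of_transpose_mul_map_mul_eq {ι k K : Type*} [Fintype ι] [DecidableEq ι] [Field k]
    [CommRing K] [Nontrivial K] [Algebra k K] {M M' : Matrix ι ι k} {A : Matrix ι ι K}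
    (hM : IsUnit M) (hA : IsUnit A)
    (hAM : Aᵀ * M.map (algebraMap k K) * A = M'.map (algebraMap k K)) : IsUnit M' := by
  have hMK : IsUnit (M.map (algebraMap k K)) := hM.map (algebraMap k K).mapMatrix
  have hM'K : IsUnit ((algebraMap k K).mapMatrix M').det := by
    rw [← isUnit_iff_isUnit_det, RingHom.mapMatrix_apply, ← hAM]
    exact (((isUnit_transpose A).2 hA).mul hMK).mul hA
  rw [← RingHom.map_det] at hM'K
  exact (isUnit_iff_isUnit_det M').2 (isUnit_of_map_unit _ _ hM'K)

section QuadraticGaussSum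

variable {F C : Type*} [Field F] [Fintype F] [DecidableEq F] [CommRing C] [IsDomain C]

lemma sum_addChar_sq_eq_gaussSum (hF : ringChar F ≠ 2) {ψ : AddChar F C} (hψ : ψ ≠ 1) :
    ∑ x, ψ (x ^ 2) = gaussSum ((quadraticChar F).ringHomComp (Int.castRingHom C)) ψ := by
  have hcard (y : F) : (#{x : F | x ^ 2 = y} : C) = (quadraticChar F y : C) + 1 := by
    have h := quadraticChar_card_sqrts hF y
    rw [Set.toFinset_ofPred] at h
    exact_mod_cast congrArg (Int.cast (R := C)) h
  calc ∑ x, ψ (x ^ 2) = ∑ y, (#{x : F | x ^ 2 = y} : C) * ψ y := by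
        rw [← sum_fiberwise' univ (· ^ 2) ψ]
        simp only [sum_const, nsmul_eq_mul]
    _ = ∑ y, (quadraticChar F y : C) * ψ y + ∑ y, ψ y := by
        simp only [hcard, add_mul, one_mul, sum_add_distrib]
    _ = _ := by
        rw [AddChar.sum_eq_zero_of_ne_one hψ, add_zero]
        rfl

lemma sum_addChar_mul_sq (hF : ringChar F ≠ 2) {ψ : AddChar F C} (hψ : ψ ≠ 1) {a : F}
    (ha : a ≠ 0) : ∑ x, ψ (a * x ^ 2) = quadraticChar F a * ∑ x, ψ (x ^ 2) := by
  set χ := (quadraticChar F).ringHomComp (Int.castRingHom C)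
  have hχ : χ a * χ a = 1 := by
    simpa [χ, sq] using congrArg (Int.cast (R := C)) (quadraticChar_sq_one ha)
  calc ∑ x, ψ (a * x ^ 2) = gaussSum χ (ψ.mulShift a) :=
        sum_addChar_sq_eq_gaussSum hF (AddChar.IsPrimitive.of_ne_one hψ ha)
    _ = χ a * (χ a * gaussSum χ (ψ.mulShift a)) := by rw [← mul_assoc, hχ, one_mul]
    _ = χ a * gaussSum χ ψ := congrArg (χ a * ·) (gaussSum_mulShift χ ψ (Units.mk0 a ha))
    _ = _ := by rw [← sum_addChar_sq_eq_gaussSum hF hψ]; rfl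

lemma matrixGaussSum_eq_quadraticChar_det_mul {ι : Type*} [Fintype ι] [DecidableEq ι]
    (hF : ringChar F ≠ 2) {ψ : AddChar F C} (hψ : ψ ≠ 1) {N : Matrix ι ι F} (hN : N.IsSymm)
    (hu : IsUnit N) :
    matrixGaussSum ψ N = quadraticChar F N.det * (∑ x, ψ (x ^ 2)) ^ Fintype.card ι := by
  have := invertibleOfNonzero (Ring.two_ne_zero hF)
  obtain ⟨P, d, hP, hd⟩ := exists_transpose_mul_mul_eq_diagonal hN
  have hdet : P.det ^ 2 * N.det = ∏ i, d i := by
    rw [← det_diagonal, ← hd, det_mul, det_mul, det_transpose]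
    ring
  have hP₀ : P.det ≠ 0 := ((isUnit_iff_isUnit_det P).1 hP).ne_zero
  have hN₀ : N.det ≠ 0 := ((isUnit_iff_isUnit_det N).1 hu).ne_zero
  have hd₀ : ∏ i, d i ≠ 0 := hdet ▸ mul_ne_zero (pow_ne_zero 2 hP₀) hN₀
  have hchar : ∏ i, quadraticChar F (d i) = quadraticChar F N.det := by
    rw [← map_prod, ← hdet, map_mul, quadraticChar_sq_one' hP₀, one_mul]
  calc matrixGaussSum ψ N = ∏ i, ∑ x, ψ (d i * x ^ 2) := by
        rw [← matrixGaussSum_transpose_mul_mul ψ N hP, hd, matrixGaussSum_diagonal]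
    _ = ∏ i, (quadraticChar F (d i) * ∑ x, ψ (x ^ 2)) :=
        prod_congr rfl fun i hi => sum_addChar_mul_sq hF hψ (prod_ne_zero_iff.1 hd₀ i hi)
    _ = _ := by
        rw [prod_mul_distrib, prod_const, card_univ, ← Int.cast_prod, hchar]

end QuadraticGaussSum

section WeilIndex

variable {F : Type*} [Field F] [Fintype F] {n : ℕ}

lemma weilIndexMat_eq_matrixGaussSum (ψ : AddChar F ℂ) (N : Matrix (Fin n) (Fin n) F) :
    weilIndexMat ψ N =
      (√(Fintype.card F) : ℂ)⁻¹ ^ n * matrixGaussSum (ψ.mulShift 2⁻¹) N := by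
  simp only [weilIndexMat, matrixGaussSum, AddChar.mulShift_apply, div_eq_inv_mul]

variable [DecidableEq F]

lemma weilIndexMat_eq_quadraticChar_mul (hF : ringChar F ≠ 2) {ψ : AddChar F ℂ} (hψ : ψ ≠ 1)
    {M M' : Matrix (Fin n) (Fin n) F} (hM : M.IsSymm) (hMu : IsUnit M) (hM' : M'.IsSymm)
    (hM'u : IsUnit M') :
    weilIndexMat ψ M' = quadraticChar F (M.det * M'.det) * weilIndexMat ψ M := by
  have hψ₂ : ψ.mulShift 2⁻¹ ≠ 1 :=
    AddChar.IsPrimitive.of_ne_one hψ (inv_ne_zero (Ring.two_ne_zero hF))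
  have hsq : (quadraticChar F M.det : ℂ) ^ 2 = 1 := mod_cast
    quadraticChar_sq_one ((isUnit_iff_isUnit_det M).1 hMu).ne_zero
  simp only [weilIndexMat_eq_matrixGaussSum, map_mul, Int.cast_mul,
    matrixGaussSum_eq_quadraticChar_det_mul hF hψ₂ hM hMu,
    matrixGaussSum_eq_quadraticChar_det_mul hF hψ₂ hM' hM'u]
  generalize (∑ x, (ψ.mulShift 2⁻¹) (x ^ 2)) ^ Fintype.card (Fin n) = g
  linear_combination -(√(Fintype.card F) : ℂ)⁻¹ ^ n * (quadraticChar F M'.det : ℂ) * g * hsq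

end WeilIndex

section Frobenius

variable {F K ι : Type*} [Field F] [Fintype F] [CommRing K] [Algebra F K] [Fintype ι]
  [DecidableEq ι]

variable (F) in
lemma det_map_pow_card (A : Matrix ι ι K) :
    (A.map (fun x => x ^ Fintype.card F)).det = A.det ^ Fintype.card F :=
  ((FiniteField.frobeniusAlgHom F K).map_det A).symm

variable [Nontrivial K]

lemma eq_quadraticChar_of_pow_card_eq_mul [DecidableEq F] (hF : ringChar F ≠ 2) {b : K}
    (hb : IsUnit b) {r t : F} (hsq : b ^ 2 = algebraMap F K r)
    (hfrob : b ^ Fintype.card F = b * algebraMap F K t) : t = quadraticChar F r := by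
  have hodd : Fintype.card F % 2 = 1 := FiniteField.odd_card_of_char_ne_two hF
  apply FaithfulSMul.algebraMap_injective F K
  apply hb.mul_left_cancel
  rw [← hfrob, quadraticChar_eq_pow_of_char_ne_two' hF, map_pow, ← hsq, ← pow_mul, ← pow_succ']
  congr 1
  lia

lemma det_eq_quadraticChar_of_map_pow_card_eq_mul [DecidableEq F] (hF : ringChar F ≠ 2)
    {M M' s : Matrix ι ι F} {A : Matrix ι ι K} (hM : IsUnit M) (hA : IsUnit A)
    (hFr : A.map (fun x => x ^ Fintype.card F) = A * s.map (algebraMap F K))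
    (hAM : Aᵀ * M.map (algebraMap F K) * A = M'.map (algebraMap F K)) :
    s.det = quadraticChar F (M.det * M'.det) := by
  have hdet_map (N : Matrix ι ι F) : (N.map (algebraMap F K)).det = algebraMap F K N.det :=
    ((algebraMap F K).map_det N).symm
  have hfrob : A.det ^ Fintype.card F = A.det * algebraMap F K s.det := by
    rw [← det_map_pow_card F, hFr, det_mul, hdet_map]
  have hdisc : A.det ^ 2 * algebraMap F K M.det = algebraMap F K M'.det := by
    rw [← hdet_map M', ← hAM, det_mul, det_mul, det_transpose, hdet_map]
    ring
  have hu : IsUnit (A.det * algebraMap F K M.det) :=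
    ((isUnit_iff_isUnit_det A).1 hA).mul (((isUnit_iff_isUnit_det M).1 hM).map _)
  refine eq_quadraticChar_of_pow_card_eq_mul hF hu ?_ ?_
  · rw [map_mul, ← hdisc]
    ring
  · rw [mul_pow, hfrob, ← map_pow, FiniteField.pow_card]
    ring

end Frobenius

theorem weilIndex_galois_twist_general {F K : Type*} [Field F] [Fintype F] [CommRing K]
    [Nontrivial K] [Algebra F K] (hq : Odd (Fintype.card F)) (ψ : AddChar F ℂ) (hψ : ψ ≠ 1)
    {n : ℕ} (M M' : Matrix (Fin n) (Fin n) F) (hM : M.IsSymm) (hMinv : IsUnit M)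
    (A : Matrix (Fin n) (Fin n) K) (hA : IsUnit A) (s : Matrix (Fin n) (Fin n) F)
    (hFr : A.map (fun x => x ^ Fintype.card F) = A * s.map (algebraMap F K))
    (hAM : Aᵀ * M.map (algebraMap F K) * A = M'.map (algebraMap F K)) :
    (s.det = 1 ∨ s.det = -1) ∧
      (s.det = 1 → weilIndexMat ψ M' = weilIndexMat ψ M) ∧
      (s.det = -1 → weilIndexMat ψ M' = -weilIndexMat ψ M) := by
  classical
  have hF : ringChar F ≠ 2 := fun h =>
    Nat.not_even_iff_odd.2 hq (Nat.even_iff.2 (FiniteField.even_card_of_char_two h))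
  have hM' : M'.IsSymm :=
    isSymm_of_transpose_mul_map_mul_eq (FaithfulSMul.algebraMap_injective F K) hM hAM
  have hM'inv : IsUnit M' := isUnit_of_transpose_mul_map_mul_eq hMinv hA hAM
  have hr : M.det * M'.det ≠ 0 :=
    (((isUnit_iff_isUnit_det M).1 hMinv).mul ((isUnit_iff_isUnit_det M').1 hM'inv)).ne_zero
  have hs : s.det = quadraticChar F (M.det * M'.det) :=
    det_eq_quadraticChar_of_map_pow_card_eq_mul hF hMinv hA hFr hAM
  have hγ := weilIndexMat_eq_quadraticChar_mul hF hψ hM hMinv hM' hM'inv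
  have hne : (-1 : F) ≠ 1 := Ring.neg_one_ne_one_of_char_ne_two hF
  rcases quadraticChar_dichotomy hr with hχ | hχ <;> simp [hs, hγ, hχ, hne, hne.symm]

/-- Galois twisting of a quadratic form by an orthogonal cocycle `s` changes the Weil index
by `det s = ±1`. -/
theorem weilIndex_galois_twist {F K : Type*} [Field F] [Fintype F] [DecidableEq F]
    [Field K] [Algebra F K] [IsAlgClosure F K]
    (hq : Odd (Fintype.card F))
    (ψ : AddChar F ℂ) (hψ : ψ ≠ 1)
    {n : ℕ} (M M' : Matrix (Fin n) (Fin n) F)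
    (hM : M.IsSymm) (hMinv : IsUnit M)
    (hM' : M'.IsSymm) (hM'inv : IsUnit M')
    (A : Matrix (Fin n) (Fin n) K) (hA : IsUnit A)
    (s : Matrix (Fin n) (Fin n) F)
    (hFr : A.map (fun x => x ^ Fintype.card F) = A * s.map (algebraMap F K))
    (hs : sᵀ * M * s = M)
    (hAM : Aᵀ * M.map (algebraMap F K) * A = M'.map (algebraMap F K)) :
    (s.det = 1 ∨ s.det = -1) ∧
      (s.det = 1 → weilIndexMat ψ M' = weilIndexMat ψ M) ∧
      (s.det = -1 → weilIndexMat ψ M' = - weilIndexMat ψ M) :=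
  weilIndex_galois_twist_general hq ψ hψ M M' hM hMinv A hA s hFr hAM
end

section
/- Let F be a finite field of odd cardinality q and ψ : F → ℂ a nontrivial additive character. Let J ∈ M_{2n}(F) be the standard symplectic matrix (J = [[0, 1_n], [−1_n, 0]] in block form) and sp(2n,F) = {X ∈ M_{2n}(F) : Xᵗ J + J X = 0}, an F-vector space of dimension n(2n+1). Then q^{-n(2n+1)/2} ∑_{X ∈ sp(2n,F)} ψ(tr(X²)/2) = ε(ψ)^n, where ε(ψ) = q^{-1/2} ∑_{x ∈ F} ψ(x²). (This is the Weil index of sp(2n) with respect to the trace pairing ⟨X,Y⟩ = tr(XY).) -/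
open Finset Matrix

/-!
In the Cartan decomposition `sp(2n) = 𝔥 ⊕ 𝔫⁺ ⊕ 𝔫⁻` the form `tr(X²)/2` is a sum of `n` squares,
from `𝔥`, and of one hyperbolic plane `c x y` with `c` invertible for each of the `n²` pairs of
opposite roots. The character sum factors accordingly: every square contributes a Gauss sum and
every hyperbolic plane contributes `q`.
-/

lemma addChar_sum_eq_prod {A M κ : Type*} [AddCommMonoid A] [CommMonoid M] (ψ : AddChar A M)
    (s : Finset κ) (f : κ → A) : ψ (∑ k ∈ s, f k) = ∏ k ∈ s, ψ (f k) :=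
  map_prod ψ.toMonoidHom (fun k => Multiplicative.ofAdd (f k)) s

lemma sum_addChar_sum_pi {A K κ α : Type*} [AddCommMonoid A] [CommSemiring K] [Fintype κ]
    [DecidableEq κ] [Fintype α] (ψ : AddChar A K) (f : κ → α → A) :
    ∑ x : κ → α, ψ (∑ k, f k (x k)) = ∏ k, ∑ a, ψ (f k a) := by
  simp only [addChar_sum_eq_prod, Fintype.prod_sum]

lemma sum_addChar_unit_mul_mul {R K : Type*} [CommRing R] [Fintype R] [CommRing K] [IsDomain K]
    {ψ : AddChar R K} (hψ : ψ.IsPrimitive) {c : R} (hc : IsUnit c) :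
    ∑ y : R × R, ψ (c * y.1 * y.2) = Fintype.card R := by
  classical
  have sum_right (a : R) : ∑ b, ψ (c * a * b) = if a = 0 then (Fintype.card R : K) else 0 := by
    simp only [mul_comm (c * a), AddChar.sum_mulShift (c * a) hψ, hc.mul_right_eq_zero,
      Nat.cast_ite, Nat.cast_zero]
  simp only [Fintype.sum_prod_type, sum_right, Finset.sum_ite_eq', Finset.mem_univ, if_true]

lemma trace_fromBlocks {m n R : Type*} [Fintype m] [Fintype n] [AddCommMonoid R]
    (A : Matrix m m R) (B : Matrix m n R) (C : Matrix n m R) (D : Matrix n n R) :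
    (fromBlocks A B C D).trace = A.trace + D.trace :=
  Fintype.sum_sum_type _

lemma inv_pow_mul_pow_mul_sq_pow {K : Type*} [Field K] (s G : K) (n : ℕ) :
    s⁻¹ ^ (n * (2 * n + 1)) * (G ^ n * (s ^ 2) ^ (n * n)) = (s⁻¹ * G) ^ n := by
  rcases eq_or_ne n 0 with rfl | hn
  · simp
  rcases eq_or_ne s 0 with rfl | hs
  · simp [hn]
  calc s⁻¹ ^ (n * (2 * n + 1)) * (G ^ n * (s ^ 2) ^ (n * n))
      = (s⁻¹ * G) ^ n * (s⁻¹ * s) ^ (2 * (n * n)) := by ring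
    _ = (s⁻¹ * G) ^ n := by rw [inv_mul_cancel₀ hs, one_pow, mul_one]

/-- The symplectic Lie algebra `sp(2n, R)`, as the type of matrices `X` with `Xᵀ J + J X = 0` for
`J = [[0, 1], [-1, 0]]` (the negative of `Matrix.J`), the rows and columns being indexed by two
copies of `ι`. -/
abbrev SymplecticLie (ι R : Type*) [Fintype ι] [DecidableEq ι] [CommRing R] : Type _ :=
  {X : Matrix (ι ⊕ ι) (ι ⊕ ι) R //
    Xᵀ * Matrix.fromBlocks 0 1 (-1) 0 + Matrix.fromBlocks 0 1 (-1) 0 * X = 0}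

namespace SymplecticLie

section Blocks

variable {ι R : Type*} [Fintype ι] [CommRing R]

lemma fromBlocks_mem_iff [DecidableEq ι] (A B C D : Matrix ι ι R) :
    (fromBlocks A B C D)ᵀ * fromBlocks 0 1 (-1) 0 + fromBlocks 0 1 (-1) 0 * fromBlocks A B C D = 0
      ↔ B.IsSymm ∧ C.IsSymm ∧ D = -Aᵀ := by
  rw [← fromBlocks_zero, fromBlocks_transpose, fromBlocks_multiply, fromBlocks_multiply,
    fromBlocks_add, fromBlocks_inj]
  simp only [Matrix.mul_zero, Matrix.zero_mul, Matrix.mul_one, Matrix.one_mul, Matrix.mul_neg,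
    Matrix.neg_mul, zero_add, add_zero]
  constructor
  · rintro ⟨hC, hD, -, hB⟩
    exact ⟨add_neg_eq_zero.1 hB, neg_add_eq_zero.1 hC, eq_neg_of_add_eq_zero_right hD⟩
  · rintro ⟨hB, hC, rfl⟩
    simp [hB.eq, hC.eq]

lemma trace_fromBlocks_sq (A B C : Matrix ι ι R) :
    (fromBlocks A B C (-Aᵀ) * fromBlocks A B C (-Aᵀ)).trace =
      2 * ∑ i, ∑ j, (A i j * A j i + B i j * C j i) := by
  have trace_entries :
      ∑ i, ∑ j, (A i j * A j i + B i j * C j i) = (A * A).trace + (B * C).trace := by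
    simp only [Matrix.trace, Matrix.diag_apply, Matrix.mul_apply, Finset.sum_add_distrib]
  rw [trace_entries, fromBlocks_multiply, trace_fromBlocks, Matrix.trace_add,
    Matrix.trace_add, Matrix.trace_mul_comm C B, neg_mul_neg, ← Matrix.transpose_mul,
    Matrix.trace_transpose]
  ring

end Blocks

section RootCoordinates

variable {ι R : Type*} [LinearOrder ι]

/-- The upper left block of the element of `sp` with Cartan coordinates `h` and root coordinates
`y`. For `i < j` the pair `y (i, j)` holds the coordinates at the roots `±(εᵢ - εⱼ)`, which are the
entries at `(i, j)` and `(j, i)` of this block. -/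
def diagonalBlock (h : ι → R) (y : ι × ι → R × R) : Matrix ι ι R :=
  of fun i j => if i < j then (y (i, j)).1 else if j < i then (y (j, i)).2 else h i

/-- The symmetric off-diagonal block of an element of `sp` with coordinates `f` at the roots
`εᵢ + εⱼ`, or at their opposites. Only the `f (i, j)` with `j ≤ i` matter, since the pairs `i < j`
index the roots `εᵢ - εⱼ`. -/
def symmetricBlock (f : ι × ι → R) : Matrix ι ι R :=
  of fun i j => f (max i j, min i j)

lemma symmetricBlock_isSymm (f : ι × ι → R) : (symmetricBlock f).IsSymm :=
  IsSymm.ext fun i j => by simp only [symmetricBlock, of_apply, max_comm, min_comm]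

variable [Fintype ι] [CommRing R]

variable (ι R) in
/-- Coordinates on `sp` adapted to its Cartan decomposition: one for each diagonal entry of the
upper left block, and a pair for each positive root and its opposite. The `n²` positive roots are
indexed by `ι × ι`, where `(i, j)` stands for `εᵢ - εⱼ` if `i < j` and for `εᵢ + εⱼ` if `j ≤ i`. -/
def rootCoordinates : (ι → R) × (ι × ι → R × R) ≃ SymplecticLie ι R where
  toFun z := ⟨fromBlocks (diagonalBlock z.1 z.2) (symmetricBlock fun k => (z.2 k).1)
      (symmetricBlock fun k => (z.2 k).2) (-(diagonalBlock z.1 z.2)ᵀ),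
    (fromBlocks_mem_iff _ _ _ _).2 ⟨symmetricBlock_isSymm _, symmetricBlock_isSymm _, rfl⟩⟩
  invFun X := (fun i => X.1.toBlocks₁₁ i i, fun k =>
    if k.1 < k.2 then (X.1.toBlocks₁₁ k.1 k.2, X.1.toBlocks₁₁ k.2 k.1)
    else (X.1.toBlocks₁₂ k.1 k.2, X.1.toBlocks₂₁ k.1 k.2))
  left_inv z := by
    ext k
    · simp [diagonalBlock]
    all_goals
      rcases lt_or_ge k.1 k.2 with hk | hk
      · simp [diagonalBlock, hk, hk.not_gt]
      · simp [symmetricBlock, hk, hk.not_gt]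
  right_inv X := by
    obtain ⟨X, hX⟩ := X
    obtain ⟨A, B, C, D, rfl⟩ : ∃ A B C D, X = fromBlocks A B C D :=
      ⟨_, _, _, _, (fromBlocks_toBlocks X).symm⟩
    obtain ⟨hB, hC, rfl⟩ := (fromBlocks_mem_iff A B C D).1 hX
    refine Subtype.ext (fromBlocks_inj.2 ⟨?_, ?_, ?_, congrArg (fun M => -Mᵀ) ?_⟩)
    all_goals
      ext i j
      rcases lt_trichotomy i j with hij | rfl | hij
      · simp [diagonalBlock, symmetricBlock, hij, hij.le, hB.apply, hC.apply]
      · simp [diagonalBlock, symmetricBlock]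
      · simp [diagonalBlock, symmetricBlock, hij, hij.not_gt, hij.le]

lemma trace_rootCoordinates_sq (h : ι → R) (y : ι × ι → R × R) :
    ((rootCoordinates ι R (h, y)).1 * (rootCoordinates ι R (h, y)).1).trace =
      2 * (∑ i, h i ^ 2 + ∑ k : ι × ι, (if k.1 = k.2 then 1 else 2) * (y k).1 * (y k).2) := by
  set A := diagonalBlock h y
  set B := symmetricBlock fun k => (y k).1
  set C := symmetricBlock fun k => (y k).2
  set g : ι → ι → R := fun i j => (if i = j then 1 else 2) * (y (i, j)).1 * (y (i, j)).2
  have entries (i j : ι) : 2 * (A i j * A j i + B i j * C j i) =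
      (if i = j then 2 * h i ^ 2 else 0) + (g i j + g j i) := by
    simp only [A, B, C, g, diagonalBlock, symmetricBlock, of_apply]
    rcases lt_trichotomy i j with hij | rfl | hij
    · simp only [hij, hij.not_gt, hij.ne, hij.ne', if_true, if_false, max_eq_right hij.le,
        max_eq_left hij.le, min_eq_left hij.le, min_eq_right hij.le]
      ring
    · simp only [lt_irrefl, if_true, if_false, max_self, min_self]
      ring
    · simp only [hij, hij.not_gt, hij.ne, hij.ne', if_true, if_false, max_eq_right hij.le,
        max_eq_left hij.le, min_eq_left hij.le, min_eq_right hij.le]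
      ring
  calc ((rootCoordinates ι R (h, y)).1 * (rootCoordinates ι R (h, y)).1).trace
      = ∑ i, ∑ j, ((if i = j then 2 * h i ^ 2 else 0) + (g i j + g j i)) := by
        simp only [← entries, ← Finset.mul_sum]
        exact trace_fromBlocks_sq A B C
    _ = 2 * ∑ i, h i ^ 2 + (∑ i, ∑ j, g i j + ∑ i, ∑ j, g j i) := by
        simp [Finset.sum_add_distrib, Finset.mul_sum]
    _ = 2 * (∑ i, h i ^ 2 + ∑ i, ∑ j, g i j) := by
        rw [Finset.sum_comm (f := fun i j => g j i)]
        ring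
    _ = _ := by rw [Fintype.sum_prod_type]

lemma sum_addChar_trace_sq [Fintype R] [DecidableEq R] [Invertible (2 : R)]
    {K : Type*} [CommRing K] [IsDomain K] {ψ : AddChar R K} (hψ : ψ.IsPrimitive) :
    ∑ X : SymplecticLie ι R, ψ (⅟2 * (X.1 * X.1).trace) =
      (∑ x, ψ (x ^ 2)) ^ Fintype.card ι *
        (Fintype.card R : K) ^ (Fintype.card ι * Fintype.card ι) := by
  set c : ι × ι → R := fun k => if k.1 = k.2 then 1 else 2 with c_def
  have c_isUnit (k : ι × ι) : IsUnit (c k) := by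
    simp only [c_def]
    split_ifs
    exacts [isUnit_one, isUnit_of_invertible 2]
  rw [← (rootCoordinates ι R).sum_comp, Fintype.sum_prod_type]
  simp only [trace_rootCoordinates_sq, invOf_mul_cancel_left', AddChar.map_add_eq_mul,
    ← Finset.mul_sum, ← Finset.sum_mul]
  rw [sum_addChar_sum_pi ψ fun _ x => x ^ 2,
    sum_addChar_sum_pi ψ fun k (p : R × R) => c k * p.1 * p.2]
  simp only [sum_addChar_unit_mul_mul hψ (c_isUnit _), Finset.prod_const,
    Finset.card_univ, Fintype.card_prod]

end RootCoordinates

end SymplecticLie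

theorem weilIndex_sp_general {ι R K : Type*} [Fintype ι] [hι : DecidableEq ι]
    [CommRing R] [Fintype R] [DecidableEq R] [Invertible (2 : R)] [Field K]
    {ψ : AddChar R K} (hψ : ψ.IsPrimitive) {s : K} (hs : s ^ 2 = Fintype.card R) :
    s⁻¹ ^ (Fintype.card ι * (2 * Fintype.card ι + 1)) *
        ∑ X : SymplecticLie ι R, ψ (⅟2 * (X.1 * X.1).trace) =
      (s⁻¹ * ∑ x, ψ (x ^ 2)) ^ Fintype.card ι := by
  let order : LinearOrder ι := .lift' (Fintype.equivFin ι) (Fintype.equivFin ι).injective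
  obtain rfl : hι = order.toDecidableEq := Subsingleton.elim _ _
  rw [SymplecticLie.sum_addChar_trace_sq hψ, ← hs, inv_pow_mul_pow_mul_sq_pow]

/-- The Weil index of `sp(2n)` with the trace pairing `⟨X,Y⟩ = tr(XY)` equals `ε(ψ)^n`:
`q^{-n(2n+1)/2} ∑_{X ∈ sp(2n,F)} ψ(tr(X²)/2) = ε(ψ)^n`, where `sp(2n,F)` is defined by the
standard symplectic matrix `J = [[0,1],[-1,0]]` via `Xᵗ J + J X = 0`. -/
theorem weilIndex_sp {F : Type*} [Field F] [Fintype F] [DecidableEq F]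
    (hq : Odd (Fintype.card F))
    (n : ℕ)
    (ψ : AddChar F ℂ) (hψ : ψ ≠ 1) :
    ((Real.sqrt (Fintype.card F) : ℂ))⁻¹ ^ (n * (2 * n + 1)) *
        ∑ X : {X : Matrix (Fin n ⊕ Fin n) (Fin n ⊕ Fin n) F //
            Xᵀ * Matrix.fromBlocks 0 1 (-1) 0 + Matrix.fromBlocks 0 1 (-1) 0 * X = 0},
          ψ ((X.1 * X.1).trace / 2) =
      (((Real.sqrt (Fintype.card F) : ℂ))⁻¹ * ∑ x : F, ψ (x ^ 2)) ^ n := by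
  have h_two : (2 : F) ≠ 0 := Ring.two_ne_zero fun hchar =>
    Nat.not_even_iff_odd.2 hq (Nat.even_iff.2 (FiniteField.even_card_of_char_two hchar))
  let := invertibleOfNonzero h_two
  have h_sqrt : (Real.sqrt (Fintype.card F) : ℂ) ^ 2 = Fintype.card F := by
    exact_mod_cast Real.sq_sqrt (Nat.cast_nonneg (Fintype.card F))
  simpa only [Fintype.card_fin, invOf_eq_inv, ← div_eq_inv_mul] using
    weilIndex_sp_general (ι := Fin n) (AddChar.IsPrimitive.of_ne_one hψ) h_sqrt
end

section
/- Let F be a finite field of odd cardinality q and ψ : F → ℂ a nontrivial additive character. Let m ≥ 1, let J ∈ M_m(F) be the antidiagonal identity matrix (J_{i,j} = 1 if i + j = m + 1, and 0 otherwise), which defines a split symmetric bilinear form, and let so(m,F) = {X ∈ M_m(F) : Xᵗ J + J X = 0}, an F-vector space of dimension m(m−1)/2. Then q^{-m(m−1)/4} ∑_{X ∈ so(m,F)} ψ(tr(X²)/2) = ε(ψ)^{⌊m/2⌋}, where ε(ψ) = q^{-1/2} ∑_{x ∈ F} ψ(x²). (This gives the Weil indices γ(spin(2n+1)) = γ(spin(2n))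 = ε(ψ)^n for the split orthogonal Lie algebras with the trace pairing.) -/
open Finset Matrix

/-!
Adding a hyperbolic plane `H` to a symmetric space `V` splits
`so(V ⊕ H) ≅ so(V) ⊕ so(H) ⊕ Hom(H, V)` orthogonally for the trace form. The trace form is `x²` on
the line `so(H)`, and on `Hom(H, V) ≅ V ⊕ V` it is a nonsingular pairing of the two copies of `V`,
so that its Gauss sum is `q ^ dim V`, which the normalization cancels. Hence each hyperbolic plane
split off contributes exactly one factor `ε(ψ)`.
-/

/-- The orthogonal Lie algebra `so(J)` of the bilinear form with Gram matrix `J`. Its elements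
are those of Mathlib's `skewAdjointMatricesLieSubalgebra J`, with the condition written as a single
equation `_ = 0`, which a block decomposition turns into blockwise equations. -/
abbrev OrthogonalLie {n F : Type*} [Fintype n] [CommRing F] (J : Matrix n n F) : Type _ :=
  {X : Matrix n n F // Xᵀ * J + J * X = 0}

/-- The unnormalized Weil index of `so(J)`: the Gauss sum of the quadratic form `tr(X²) / 2`. -/
def traceGaussSum {n F R : Type*} [Fintype n] [DecidableEq n] [Field F] [Fintype F]
    [DecidableEq F] [CommRing R] (ψ : AddChar F R) (J : Matrix n n F) : R :=
  ∑ X : OrthogonalLie J, ψ ((X.1 * X.1).trace / 2)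

/-- The antidiagonal identity matrix, Gram matrix of the split symmetric form of rank `m`. Indices
start at `0`, whence the condition `i + j + 1 = m`. -/
def exchangeMatrix (F : Type*) [Zero F] [One F] (m : ℕ) : Matrix (Fin m) (Fin m) F :=
  Matrix.of fun i j => if (i : ℕ) + (j : ℕ) + 1 = m then 1 else 0

lemma trace_fromBlocks_mul_self {n l F : Type*} [Fintype n] [Fintype l] [CommSemiring F]
    (A : Matrix n n F) (B : Matrix n l F) (C : Matrix l n F) (D : Matrix l l F) :
    (fromBlocks A B C D * fromBlocks A B C D).trace =
      (A * A).trace + (D * D).trace + 2 * (C * B).trace := by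
  have trace_eq_add (M : Matrix (n ⊕ l) (n ⊕ l) F) :
      M.trace = M.toBlocks₁₁.trace + M.toBlocks₂₂.trace := Fintype.sum_sum_type _
  rw [fromBlocks_multiply, trace_eq_add, toBlocks_fromBlocks₁₁, toBlocks_fromBlocks₂₂, trace_add,
    trace_add, trace_mul_comm B C]
  ring

section BlockDecomposition

variable {n l F : Type*} [Fintype n] [Fintype l] [DecidableEq l] [CommRing F]
  {J : Matrix n n F} {K : Matrix l l F}

lemma skewAdjoint_fromBlocks_iff (hJ : J.IsSymm) (hK : K.IsSymm) (hdet : IsUnit K.det)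
    {A : Matrix n n F} {B : Matrix n l F} {C : Matrix l n F} {D : Matrix l l F} :
    (fromBlocks A B C D)ᵀ * fromBlocks J 0 0 K + fromBlocks J 0 0 K * fromBlocks A B C D = 0 ↔
      Aᵀ * J + J * A = 0 ∧ Dᵀ * K + K * D = 0 ∧ C = -(K⁻¹ * (Bᵀ * J)) := by
  have lower_left : Bᵀ * J + K * C = 0 ↔ C = -(K⁻¹ * (Bᵀ * J)) := by
    refine ⟨fun h => ?_, fun h => ?_⟩
    · rw [eq_neg_of_add_eq_zero_left h, Matrix.mul_neg, neg_neg,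
        nonsing_inv_mul_cancel_left _ _ hdet]
    · rw [h, Matrix.mul_neg, mul_nonsing_inv_cancel_left _ _ hdet, add_neg_cancel]
  have upper_right : Cᵀ * K + J * B = 0 ↔ Bᵀ * J + K * C = 0 := by
    rw [← transpose_eq_zero, transpose_add, transpose_mul, transpose_mul, transpose_transpose,
      hJ.eq, hK.eq, add_comm]
  rw [fromBlocks_transpose, fromBlocks_multiply, fromBlocks_multiply, fromBlocks_add,
    ← fromBlocks_zero, fromBlocks_inj]
  simp only [Matrix.mul_zero, Matrix.zero_mul, add_zero, zero_add, upper_right, lower_left]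
  tauto

/-- The decomposition `so(V ⊕ W) ≃ so(V) × so(W) × Hom(W, V)` for an orthogonal sum, sending a
block matrix to its two diagonal blocks and its upper right block. -/
noncomputable def orthogonalLieFromBlocksEquiv (hJ : J.IsSymm) (hK : K.IsSymm)
    (hdet : IsUnit K.det) :
    OrthogonalLie (fromBlocks J 0 0 K) ≃ OrthogonalLie J × OrthogonalLie K × Matrix n l F where
  toFun X :=
    have hX := (skewAdjoint_fromBlocks_iff hJ hK hdet).1
      ((fromBlocks_toBlocks X.1).symm ▸ X.2)
    (⟨X.1.toBlocks₁₁, hX.1⟩, ⟨X.1.toBlocks₂₂, hX.2.1⟩, X.1.toBlocks₁₂)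
  invFun Y := ⟨fromBlocks Y.1.1 Y.2.2 (-(K⁻¹ * (Y.2.2ᵀ * J))) Y.2.1.1,
    (skewAdjoint_fromBlocks_iff hJ hK hdet).2 ⟨Y.1.2, Y.2.1.2, rfl⟩⟩
  left_inv X := by
    have hX := (skewAdjoint_fromBlocks_iff hJ hK hdet).1
      ((fromBlocks_toBlocks X.1).symm ▸ X.2)
    exact Subtype.ext (by simp only [← hX.2.2, fromBlocks_toBlocks])
  right_inv _ := rfl

end BlockDecomposition

section GaussSums

variable {n k l F R : Type*} [Fintype n] [DecidableEq n] [Fintype k] [DecidableEq k]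
  [Fintype l] [DecidableEq l] [Field F] [Fintype F] [DecidableEq F] [CommRing R]

lemma traceGaussSum_submatrix_equiv (ψ : AddChar F R) (J : Matrix n n F) (e : k ≃ n) :
    traceGaussSum ψ (J.submatrix e e) = traceGaussSum ψ J := by
  refine (Fintype.sum_equiv ((reindex e.symm e.symm).subtypeEquiv fun X => ?_) _ _ fun X => ?_).symm
  · have hsubmatrix :
        (X.submatrix e e)ᵀ * J.submatrix e e + J.submatrix e e * X.submatrix e e =
          (Xᵀ * J + J * X).submatrix e e := by
      rw [transpose_submatrix, submatrix_mul_equiv, submatrix_mul_equiv, submatrix_add]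
      rfl
    simp only [reindex_apply, Equiv.symm_symm, hsubmatrix]
    exact ((reindex e.symm e.symm).injective.eq_iff' rfl).symm
  · simp only [Equiv.subtypeEquiv_apply, reindex_apply, Equiv.symm_symm, submatrix_mul_equiv]
    exact congrArg (fun t => ψ (t / 2)) (Equiv.sum_comp e fun i => (X.1 * X.1) i i).symm

lemma traceGaussSum_fromBlocks (ψ : AddChar F R) {J : Matrix n n F} {K : Matrix l l F}
    (h2 : (2 : F) ≠ 0) (hJ : J.IsSymm) (hK : K.IsSymm) (hdet : IsUnit K.det) :
    traceGaussSum ψ (fromBlocks J 0 0 K) = traceGaussSum ψ J * (traceGaussSum ψ K *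
      ∑ B : Matrix n l F, ψ (-(K⁻¹ * (Bᵀ * J * B)).trace)) := by
  simp only [traceGaussSum, Fintype.sum_mul_sum, ← Fintype.sum_prod_type']
  refine (Fintype.sum_equiv (orthogonalLieFromBlocksEquiv hJ hK hdet).symm _ _ ?_).symm
  rintro ⟨A, D, B⟩
  have htrace : (fromBlocks A.1 B (-(K⁻¹ * (Bᵀ * J))) D.1 *
      fromBlocks A.1 B (-(K⁻¹ * (Bᵀ * J))) D.1).trace / 2 =
      (A.1 * A.1).trace / 2 + ((D.1 * D.1).trace / 2 + -(K⁻¹ * (Bᵀ * J * B)).trace) := by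
    rw [trace_fromBlocks_mul_self, Matrix.neg_mul, trace_neg, Matrix.mul_assoc K⁻¹]
    field_simp
    ring
  rw [← AddChar.map_add_eq_mul, ← AddChar.map_add_eq_mul, ← htrace]
  rfl

end GaussSums

lemma sum_sum_addChar_of_separatingLeft {F R V W : Type*} [Field F] [CommRing R] [IsDomain R]
    [AddCommGroup V] [Module F V] [Fintype V] [AddCommGroup W] [Module F W] [Fintype W]
    {ψ : AddChar F R} (hψ : ψ ≠ 1) {b : V →ₗ[F] W →ₗ[F] F} (hb : b.SeparatingLeft) :
    ∑ v, ∑ w, ψ (b v w) = Fintype.card W := by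
  classical
  have sum_eq_zero {v : V} (hv : v ≠ 0) : ∑ w, ψ (b v w) = 0 := by
    obtain ⟨w, hw⟩ : ∃ w, b v w ≠ 0 := by
      by_contra! h
      exact hv (hb v h)
    obtain ⟨x, hx⟩ := AddChar.ne_one_iff.1 hψ
    refine AddChar.sum_eq_zero_of_ne_one (ψ := ψ.compAddMonoidHom (b v).toAddMonoidHom) ?_
    refine AddChar.ne_one_iff.2 ⟨(x / b v w) • w, ?_⟩
    simpa [hw] using hx
  rw [Fintype.sum_eq_single 0 fun v hv => sum_eq_zero hv]
  simp

section ExchangeMatrix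

variable {F R : Type*}

lemma exchangeMatrix_isSymm [Zero F] [One F] (m : ℕ) : (exchangeMatrix F m).IsSymm := by
  ext i j
  simp [exchangeMatrix, add_comm]

lemma exchangeMatrix_mul_self [NonAssocSemiring F] (m : ℕ) :
    exchangeMatrix F m * exchangeMatrix F m = 1 := by
  have hrev (i j : Fin m) : (i : ℕ) + j + 1 = m ↔ i.rev = j := by
    rw [Fin.ext_iff, Fin.val_rev]
    lia
  ext i j
  simp [exchangeMatrix, mul_apply, hrev, Fin.rev_eq_iff, one_apply]

lemma isUnit_det_exchangeMatrix [CommRing F] (m : ℕ) : IsUnit (exchangeMatrix F m).det :=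
  isUnit_det_of_left_inverse (exchangeMatrix_mul_self m)

lemma exchangeMatrix_one [Zero F] [One F] : exchangeMatrix F 1 = 1 := by
  ext i j
  simp [exchangeMatrix, one_apply, Subsingleton.elim i j]

lemma exchangeMatrix_two [Zero F] [One F] : exchangeMatrix F 2 = !![0, 1; 1, 0] := by
  ext i j
  fin_cases i <;> fin_cases j <;> simp [exchangeMatrix]

/-- The indexing of `V ⊕ H` that puts the basis of `V` between the two basis vectors of `H`. -/
noncomputable def finSumTwoEquiv (m : ℕ) : Fin m ⊕ Fin 2 ≃ Fin (m + 2) :=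
  Equiv.ofBijective (Sum.elim (fun i => i.succ.castSucc) ![0, Fin.last (m + 1)]) <| by
    rw [Fintype.bijective_iff_injective_and_card]
    refine ⟨?_, by simp⟩
    rintro (i | i) (j | j) h
    · simp_all
    · fin_cases j
      · simp_all
      · simp_all [Fin.ext_iff, i.isLt.ne]
    · fin_cases i
      · simp_all [Fin.ext_iff]
      · simp_all [Fin.ext_iff, j.isLt.ne']
    · fin_cases i <;> fin_cases j <;> simp_all [Fin.ext_iff]

lemma exchangeMatrix_add_two [Zero F] [One F] (m : ℕ) :
    (exchangeMatrix F (m + 2)).submatrix (finSumTwoEquiv m) (finSumTwoEquiv m) =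
      fromBlocks (exchangeMatrix F m) 0 0 (exchangeMatrix F 2) := by
  ext (i | i) (j | j)
  · simp only [exchangeMatrix, finSumTwoEquiv, submatrix_apply, of_apply, fromBlocks_apply₁₁,
      Equiv.ofBijective_apply, Sum.elim_inl, Fin.val_castSucc, Fin.val_succ]
    congr 1
    simp only [eq_iff_iff]
    lia
  · fin_cases j
    · simp [exchangeMatrix, finSumTwoEquiv, i.isLt.ne]
    · simp [exchangeMatrix, finSumTwoEquiv]
  · fin_cases i
    · simp [exchangeMatrix, finSumTwoEquiv, j.isLt.ne]
    · simp [exchangeMatrix, finSumTwoEquiv]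
  · fin_cases i <;> fin_cases j <;> simp [exchangeMatrix, finSumTwoEquiv]

end ExchangeMatrix

lemma skewAdjoint_hyperbolicPlane_iff {F : Type*} [CommRing F] [NoZeroDivisors F] (h2 : (2 : F) ≠ 0)
    {X : Matrix (Fin 2) (Fin 2) F} :
    Xᵀ * !![0, 1; 1, 0] + !![0, 1; 1, 0] * X = 0 ↔ X = diagonal ![X 0 0, -X 0 0] := by
  have hblock : Xᵀ * !![0, 1; 1, 0] + !![0, 1; 1, 0] * X =
      !![2 * X 1 0, X 0 0 + X 1 1; X 0 0 + X 1 1, 2 * X 0 1] := by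
    ext i j
    fin_cases i <;> fin_cases j <;> simp [mul_apply, vecMul, dotProduct, two_mul, add_comm]
  have hzero : !![2 * X 1 0, X 0 0 + X 1 1; X 0 0 + X 1 1, 2 * X 0 1] = 0 ↔
      X 0 1 = 0 ∧ X 1 0 = 0 ∧ X 1 1 = -X 0 0 := by
    rw [← Matrix.ext_iff]
    simp only [Fin.forall_fin_two, of_apply, cons_val_zero, cons_val_one, Matrix.zero_apply,
      mul_eq_zero, h2, false_or, add_eq_zero_iff_eq_neg']
    tauto
  have hdiag : X = diagonal ![X 0 0, -X 0 0] ↔ X 0 1 = 0 ∧ X 1 0 = 0 ∧ X 1 1 = -X 0 0 := by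
    rw [← Matrix.ext_iff]
    simp [Fin.forall_fin_two]
  rw [hblock, hzero, hdiag]

lemma trace_hyperbolicPlane_mul_conj {n F : Type*} [Fintype n] [CommSemiring F]
    {J : Matrix n n F} (hJ : J.IsSymm) (u v : n → F) :
    (!![0, 1; 1, 0] * (of ![u, v] * J * (of ![u, v])ᵀ)).trace = 2 * (u ⬝ᵥ J *ᵥ v) := by
  have conj_apply (i j : Fin 2) :
      (of ![u, v] * J * (of ![u, v])ᵀ) i j = ![u, v] i ⬝ᵥ J *ᵥ ![u, v] j := by
    rw [Matrix.mul_assoc]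
    rfl
  have hcomm : v ⬝ᵥ J *ᵥ u = u ⬝ᵥ J *ᵥ v := by
    rw [dotProduct_comm, ← vecMul_transpose, hJ.eq, dotProduct_mulVec]
  have trace_swap_mul (M : Matrix (Fin 2) (Fin 2) F) :
      (!![0, 1; 1, 0] * M).trace = M 1 0 + M 0 1 := by
    simp [trace_fin_two, vecMul, dotProduct]
  rw [trace_swap_mul, conj_apply, conj_apply, two_mul]
  exact congrArg (· + u ⬝ᵥ J *ᵥ v) hcomm

lemma sum_addChar_trace_hyperbolicPlane_mul_conj {n F R : Type*} [Fintype n] [DecidableEq n]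
    [Field F] [Fintype F] [CommRing R] [IsDomain R] {ψ : AddChar F R} (hψ : ψ ≠ 1)
    (h2 : (2 : F) ≠ 0) {J : Matrix n n F} (hJ : J.IsSymm) (hdet : IsUnit J.det) :
    ∑ B : Matrix n (Fin 2) F, ψ (-(!![0, 1; 1, 0]⁻¹ * (Bᵀ * J * B)).trace) =
      (Fintype.card F : R) ^ Fintype.card n := by
  have hinv : (!![0, 1; 1, 0] : Matrix (Fin 2) (Fin 2) F)⁻¹ = !![0, 1; 1, 0] :=
    inv_eq_left_inv (by simp [one_fin_two])
  have hsep : (toLinearMap₂' F ((-2 : F) • J)).SeparatingLeft :=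
    LinearMap.separatingLeft_toLinearMap₂'_of_det_ne_zero' (M := (-2 : F) • J) <| by
      rw [det_smul]
      exact mul_ne_zero (pow_ne_zero _ (neg_ne_zero.2 h2)) hdet.ne_zero
  have htrace (u v : n → F) : -(!![0, 1; 1, 0] * (of ![u, v] * J * (of ![u, v])ᵀ)).trace =
      toLinearMap₂' F ((-2 : F) • J) u v := by
    rw [trace_hyperbolicPlane_mul_conj hJ, toLinearMap₂'_apply', smul_mulVec, dotProduct_smul,
      smul_eq_mul, neg_mul]
  let columns : (n → F) × (n → F) ≃ Matrix n (Fin 2) F :=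
    (finTwoArrowEquiv (n → F)).symm.trans (Equiv.piComm _)
  rw [hinv, ← Equiv.sum_comp columns, Fintype.sum_prod_type, ← Nat.cast_pow, ← Fintype.card_fun,
    ← sum_sum_addChar_of_separatingLeft hψ hsep]
  exact Fintype.sum_congr _ _ fun u => Fintype.sum_congr _ _ fun v => congrArg ψ (htrace u v)

section SplitForm

variable {n F R : Type*} [Fintype n] [DecidableEq n] [Field F] [Fintype F] [DecidableEq F]
  [CommRing R]

lemma traceGaussSum_of_isEmpty [IsEmpty n] (ψ : AddChar F R) (J : Matrix n n F) :
    traceGaussSum ψ J = 1 := by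
  have : Unique (OrthogonalLie J) := ⟨⟨⟨0, Subsingleton.elim _ _⟩⟩, fun _ => Subsingleton.elim _ _⟩
  simp [traceGaussSum, trace]

lemma traceGaussSum_one_of_unique [Unique n] (ψ : AddChar F R) (h2 : (2 : F) ≠ 0) :
    traceGaussSum ψ (1 : Matrix n n F) = 1 := by
  have eq_zero (X : OrthogonalLie (1 : Matrix n n F)) : X = ⟨0, by simp⟩ := by
    refine Subtype.ext (Matrix.ext fun i j => ?_)
    have h := congrFun₂ X.2 default default
    rw [Subsingleton.elim i default, Subsingleton.elim j default]
    simpa [← two_mul, h2] using h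
  rw [traceGaussSum, Fintype.sum_eq_single _ fun X hX => absurd (eq_zero X) hX]
  simp

lemma traceGaussSum_hyperbolicPlane (ψ : AddChar F R) (h2 : (2 : F) ≠ 0) :
    traceGaussSum ψ !![(0 : F), 1; 1, 0] = ∑ x, ψ (x ^ 2) := by
  have htrace (x : F) : (diagonal ![x, -x] * diagonal ![x, -x]).trace = 2 * x ^ 2 := by
    rw [diagonal_mul_diagonal, trace_diagonal, Fin.sum_univ_two, cons_val_zero, cons_val_one,
      cons_val_zero]
    ring
  refine Fintype.sum_equiv
    { toFun := fun X : OrthogonalLie !![(0 : F), 1; 1, 0] => X.1 0 0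
      invFun x := ⟨diagonal ![x, -x], (skewAdjoint_hyperbolicPlane_iff h2).2 (by simp)⟩
      left_inv X := Subtype.ext ((skewAdjoint_hyperbolicPlane_iff h2).1 X.2).symm
      right_inv x := by simp } _ _ fun X => congrArg ψ ?_
  rw [(skewAdjoint_hyperbolicPlane_iff h2).1 X.2, htrace, mul_div_cancel_left₀ _ h2]
  simp

lemma traceGaussSum_fromBlocks_hyperbolicPlane [IsDomain R] {ψ : AddChar F R} (hψ : ψ ≠ 1)
    (h2 : (2 : F) ≠ 0) {J : Matrix n n F} (hJ : J.IsSymm) (hdet : IsUnit J.det) :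
    traceGaussSum ψ (fromBlocks J 0 0 !![0, 1; 1, 0]) =
      traceGaussSum ψ J * ((∑ x, ψ (x ^ 2)) * (Fintype.card F : R) ^ Fintype.card n) := by
  rw [traceGaussSum_fromBlocks ψ h2 hJ (exchangeMatrix_two (F := F) ▸ exchangeMatrix_isSymm 2)
      (by simp), traceGaussSum_hyperbolicPlane ψ h2,
    sum_addChar_trace_hyperbolicPlane_mul_conj hψ h2 hJ hdet]

lemma traceGaussSum_exchangeMatrix_add_two [IsDomain R] {ψ : AddChar F R} (hψ : ψ ≠ 1)
    (h2 : (2 : F) ≠ 0) (m : ℕ) :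
    traceGaussSum ψ (exchangeMatrix F (m + 2)) =
      traceGaussSum ψ (exchangeMatrix F m) * ((∑ x, ψ (x ^ 2)) * (Fintype.card F : R) ^ m) := by
  rw [← traceGaussSum_submatrix_equiv ψ _ (finSumTwoEquiv m), exchangeMatrix_add_two,
    exchangeMatrix_two, traceGaussSum_fromBlocks_hyperbolicPlane hψ h2 (exchangeMatrix_isSymm m)
      (isUnit_det_exchangeMatrix m), Fintype.card_fin]

end SplitForm

lemma two_ne_zero_of_odd_card_s12 {F : Type*} [Field F] [Fintype F] (hq : Odd (Fintype.card F)) :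
    (2 : F) ≠ 0 :=
  Ring.two_ne_zero fun h =>
    Nat.not_even_iff_odd.2 hq (Nat.even_iff.2 (FiniteField.even_card_of_char_two h))

theorem weilIndex_so_split_general {F R : Type*} [Field F] [Fintype F] [DecidableEq F]
    [CommRing R] [IsDomain R] (hq : Odd (Fintype.card F)) {ψ : AddChar F R} (hψ : ψ ≠ 1) {c : R}
    (hc : c ^ 2 * Fintype.card F = 1) (m : ℕ) :
    c ^ (m * (m - 1) / 2) * traceGaussSum ψ (exchangeMatrix F m) =
      (c * ∑ x, ψ (x ^ 2)) ^ (m / 2) := by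
  have h2 := two_ne_zero_of_odd_card_s12 hq
  rw [← Nat.choose_two_right]
  induction m using Nat.twoStepInduction with
  | zero => simp [traceGaussSum_of_isEmpty]
  | one => simp [exchangeMatrix_one, traceGaussSum_one_of_unique ψ h2]
  | more m ih _ =>
    have hchoose : (m + 2).choose 2 = m.choose 2 + (2 * m + 1) := by
      simp only [Nat.choose_succ_succ', Nat.choose_zero_right, Nat.choose_one_right, zero_add]
      ring
    have hcancel : c ^ (2 * m) * (Fintype.card F : R) ^ m = 1 := by
      rw [pow_mul, ← mul_pow, hc, one_pow]
    rw [traceGaussSum_exchangeMatrix_add_two hψ h2, hchoose, Nat.add_div_right m two_pos, pow_succ,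
      ← ih]
    linear_combination (c ^ m.choose 2 * traceGaussSum ψ (exchangeMatrix F m) * c *
      ∑ x, ψ (x ^ 2)) * hcancel

/-- The Weil index of the split orthogonal Lie algebra `so(m)` with the trace pairing equals
`ε(ψ)^{⌊m/2⌋}`: `q^{-m(m-1)/4} ∑_{X ∈ so(m,F)} ψ(tr(X²)/2) = ε(ψ)^{⌊m/2⌋}`, where `so(m,F)`
is defined by the antidiagonal identity matrix `J` via `Xᵗ J + J X = 0`. -/
theorem weilIndex_so_split {F : Type*} [Field F] [Fintype F] [DecidableEq F]
    (hq : Odd (Fintype.card F))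
    (m : ℕ) (hm : 1 ≤ m)
    (ψ : AddChar F ℂ) (hψ : ψ ≠ 1) :
    ((Real.sqrt (Fintype.card F) : ℂ))⁻¹ ^ (m * (m - 1) / 2) *
        ∑ X : {X : Matrix (Fin m) (Fin m) F //
            Xᵀ * (Matrix.of fun i j : Fin m => if (i : ℕ) + (j : ℕ) + 1 = m then (1 : F) else 0)
              + (Matrix.of fun i j : Fin m => if (i : ℕ) + (j : ℕ) + 1 = m then (1 : F) else 0)
                * X = 0},
          ψ ((X.1 * X.1).trace / 2) =
      (((Real.sqrt (Fintype.card F) : ℂ))⁻¹ * ∑ x : F, ψ (x ^ 2)) ^ (m / 2) := by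
  have hc : ((Real.sqrt (Fintype.card F) : ℂ))⁻¹ ^ 2 * Fintype.card F = 1 := by
    rw [← Complex.ofReal_inv, ← Complex.ofReal_pow, inv_pow, Real.sq_sqrt (Nat.cast_nonneg _)]
    simp
  exact weilIndex_so_split_general hq hψ hc m
end

section
/- Let F be a finite field of cardinality q and characteristic p > 3, and ψ : F → ℂ a nontrivial additive character. Then q^{-1} ∑_{x,y ∈ F} ψ(x² − 3xy + 3y²) = χ₃(q), where χ₃ is the quadratic character of ZMod 3 evaluated at q mod 3 (the Legendre symbol (q/3)). (This is the Weil index γ(G₂) = (q/3) computed from the symmetrized Cartan matrix [[2,−3],[−3,6]] of type G₂.) -/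
open Finset

/-!
`x² - 3xy + 3y²` is the norm form of `F[ω]`, `ω² = -3 - 3ω`. The norm of a nondegenerate quadratic
algebra over `F` is surjective and multiplicative, so it takes every nonzero value equally often,
and the sum of `ψ` over its values depends only on the number of elements of norm `0`, hence only
on the number `r` of roots of `t² + 3t + 3` in `F`: it equals `q (r - 1)`. As
`t² + 3t + 3 = (t + 1)² + (t + 1) + 1`, in characteristic other than `3` these roots correspond to
the primitive cube roots of unity in `F`, so that `r` is `2` or `0` according as `q` is `1` or `2`
modulo `3`.
-/

theorem sum_addChar_comp_of_card_fiber_eq {A G R : Type*} [Fintype A] [AddGroup G] [Finite G]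
    [DecidableEq G] [CommRing R] [IsDomain R] {ψ : AddChar G R} (hψ : ψ ≠ 1) {f : A → G} {n : ℕ}
    (hf : ∀ c ≠ 0, #{a | f a = c} = n) :
    ∑ a, ψ (f a) = (#{a | f a = 0} : R) - n := by
  have := Fintype.ofFinite G
  have card_fiber (c : G) :
      (#{a | f a = c} : R) = n + if c = 0 then (#{a | f a = 0} : R) - n else 0 := by
    split_ifs with hc
    · rw [hc, add_sub_cancel]
    · rw [hf c hc, add_zero]
  calc ∑ a, ψ (f a) = ∑ c, (#{a | f a = c} : R) * ψ c := by
        simp_rw [← sum_fiberwise' univ f ψ, sum_const, nsmul_eq_mul]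
    _ = n * ∑ c, ψ c + ((#{a | f a = 0} : R) - n) := by
        rw [sum_congr rfl fun c _ => congrArg (· * ψ c) (card_fiber c)]
        simp_rw [add_mul, sum_add_distrib, ← mul_sum, ite_mul, zero_mul]
        rw [sum_ite_eq' univ 0, if_pos (mem_univ 0), AddChar.map_zero_eq_one, mul_one]
    _ = (#{a | f a = 0} : R) - n := by
        rw [AddChar.sum_eq_zero_of_ne_one hψ, mul_zero, zero_add]

section QuadraticAlgebraNorm

instance quadraticAlgebraFintype {R : Type*} [Fintype R] (a b : R) :
    Fintype (QuadraticAlgebra R a b) :=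
  .ofEquiv _ (QuadraticAlgebra.equivProd a b).symm

theorem sum_quadraticAlgebra {R M : Type*} [Fintype R] [AddCommMonoid M] {a b : R}
    (f : QuadraticAlgebra R a b → M) : ∑ z, f z = ∑ x, ∑ y, f ⟨x, y⟩ := by
  rw [← Fintype.sum_prod_type' fun x y => f ⟨x, y⟩]
  exact Fintype.sum_equiv (QuadraticAlgebra.equivProd a b) _ _ fun _ => rfl

variable {F : Type*} [Field F] {a b : F}

theorem quadraticAlgebra_norm_surjective [Finite F] (hD : b ^ 2 + 4 * a ≠ 0) :
    Function.Surjective (QuadraticAlgebra.norm : QuadraticAlgebra F a b →* F) := by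
  have := Fintype.ofFinite F
  intro c
  by_cases hF : ringChar F = 2
  · obtain ⟨x, rfl⟩ := FiniteField.isSquare_of_char_two hF c
    exact ⟨⟨x, 0⟩, by simp [QuadraticAlgebra.norm_def]⟩
  · -- Completing the square, `4 N(x + yω) = (2x + by)² - (b² + 4a) y²`.
    open Polynomial in
    obtain ⟨u, y, huy⟩ : ∃ u y : F, u ^ 2 = (b ^ 2 + 4 * a) * y ^ 2 + 4 * c := by
      obtain ⟨u, y, h⟩ := FiniteField.exists_root_sum_quadratic (degree_X_pow 2)
        (degree_quadratic (b := 0) (c := -(4 * c)) (neg_ne_zero.mpr hD))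
        (FiniteField.odd_card_of_char_ne_two hF)
      refine ⟨u, y, ?_⟩
      simp only [eval_pow, eval_X, eval_add, eval_mul, eval_C] at h
      linear_combination h
    have h2 : (2 : F) ≠ 0 := Ring.two_ne_zero hF
    refine ⟨⟨(u - b * y) / 2, y⟩, ?_⟩
    rw [QuadraticAlgebra.norm_def]
    field_simp
    linear_combination huy

variable [Fintype F] [DecidableEq F]

theorem card_quadraticAlgebra_norm_eq_card_norm_eq_one (hD : b ^ 2 + 4 * a ≠ 0) {c : F}
    (hc : c ≠ 0) :
    #{z : QuadraticAlgebra F a b | z.norm = c} = #{z : QuadraticAlgebra F a b | z.norm = 1} := by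
  obtain ⟨w, hw⟩ := quadraticAlgebra_norm_surjective hD c
  have w_isUnit : IsUnit w := QuadraticAlgebra.isUnit_iff_norm_isUnit.mpr (hw ▸ hc.isUnit)
  symm
  refine card_equiv w_isUnit.unit.mulLeft fun z => ?_
  simp [hw, hc]

theorem card_quadraticAlgebra_norm_eq_zero :
    #{z : QuadraticAlgebra F a b | z.norm = 0} =
      (Fintype.card F - 1) * #{t : F | t ^ 2 = b * t + a} + 1 := by
  have card_slice (y : F) (hy : y ≠ 0) :
      #{x : F | (⟨x, y⟩ : QuadraticAlgebra F a b).norm = 0} = #{t : F | t ^ 2 = b * t + a} := by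
    symm
    refine card_equiv (Equiv.mulRight₀ (-y) (neg_ne_zero.mpr hy)) fun t => ?_
    have norm_eq : (⟨t * -y, y⟩ : QuadraticAlgebra F a b).norm = y ^ 2 * (t ^ 2 - (b * t + a)) := by
      rw [QuadraticAlgebra.norm_def]
      ring
    rw [mem_filter_univ, mem_filter_univ, Equiv.mulRight₀_apply, norm_eq,
      mul_eq_zero_iff_left (pow_ne_zero 2 hy), sub_eq_zero]
  have card_slice_zero : #{x : F | (⟨x, 0⟩ : QuadraticAlgebra F a b).norm = 0} = 1 := by
    simp [QuadraticAlgebra.norm_def, filter_eq']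
  calc #{z : QuadraticAlgebra F a b | z.norm = 0}
      = ∑ y : F, #{x : F | (⟨x, y⟩ : QuadraticAlgebra F a b).norm = 0} := by
        simp_rw [card_filter]
        rw [sum_quadraticAlgebra, sum_comm]
    _ = ∑ _y ∈ univ.erase (0 : F), #{t : F | t ^ 2 = b * t + a} + 1 := by
        rw [← sum_erase_add _ _ (mem_univ 0), card_slice_zero,
          sum_congr rfl fun y hy => card_slice y (ne_of_mem_erase hy)]
    _ = (Fintype.card F - 1) * #{t : F | t ^ 2 = b * t + a} + 1 := by
        rw [sum_const, card_erase_of_mem (mem_univ 0), card_univ, smul_eq_mul]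

theorem card_quadraticAlgebra_norm_eq_add_card_roots (hD : b ^ 2 + 4 * a ≠ 0) {c : F}
    (hc : c ≠ 0) :
    #{z : QuadraticAlgebra F a b | z.norm = c} + #{t : F | t ^ 2 = b * t + a} =
      Fintype.card F + 1 := by
  have card_total : Fintype.card F ^ 2 = #{z : QuadraticAlgebra F a b | z.norm = 0} +
      (Fintype.card F - 1) * #{z : QuadraticAlgebra F a b | z.norm = c} := by
    calc Fintype.card F ^ 2 = #(univ : Finset (QuadraticAlgebra F a b)) := by
          rw [card_univ, Fintype.card_congr (QuadraticAlgebra.equivProd a b), Fintype.card_prod, sq]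
      _ = ∑ d : F, #{z : QuadraticAlgebra F a b | z.norm = d} :=
          card_eq_sum_card_fiberwise fun _ _ => mem_univ _
      _ = _ := by
          rw [← add_sum_erase _ _ (mem_univ 0), sum_congr rfl fun d hd =>
            (card_quadraticAlgebra_norm_eq_card_norm_eq_one hD (ne_of_mem_erase hd)).trans
              (card_quadraticAlgebra_norm_eq_card_norm_eq_one hD hc).symm,
            sum_const, card_erase_of_mem (mem_univ 0), card_univ, smul_eq_mul]
  obtain ⟨m, hm⟩ := Nat.exists_eq_add_of_lt (Fintype.one_lt_card (α := F))
  rw [card_quadraticAlgebra_norm_eq_zero, hm, Nat.add_sub_cancel] at card_total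
  rw [hm]
  apply Nat.eq_of_mul_eq_mul_left (show 0 < 1 + m by lia)
  linarith

theorem sum_addChar_quadraticAlgebra_norm {R : Type*} [CommRing R] [IsDomain R] {ψ : AddChar F R}
    (hψ : ψ ≠ 1) (hD : b ^ 2 + 4 * a ≠ 0) :
    ∑ z : QuadraticAlgebra F a b, ψ z.norm =
      Fintype.card F * (#{t : F | t ^ 2 = b * t + a} - 1) := by
  have card_norm_one := congrArg (Nat.cast : ℕ → R)
    (card_quadraticAlgebra_norm_eq_add_card_roots hD one_ne_zero)
  rw [sum_addChar_comp_of_card_fiber_eq hψ fun c hc =>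
    card_quadraticAlgebra_norm_eq_card_norm_eq_one hD hc, card_quadraticAlgebra_norm_eq_zero]
  push_cast [Nat.cast_pred Fintype.card_pos] at card_norm_one ⊢
  linear_combination -card_norm_one

end QuadraticAlgebraNorm

section PrimitiveRoots

variable {F : Type*} [Field F]

theorem mem_primitiveRoots_three_iff (h3 : (3 : F) ≠ 0) {t : F} :
    t ∈ primitiveRoots 3 F ↔ t ^ 2 + t + 1 = 0 := by
  have : NeZero ((3 : ℕ) : F) := ⟨mod_cast h3⟩
  rw [mem_primitiveRoots three_pos, ← Polynomial.isRoot_cyclotomic_iff,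
    Polynomial.cyclotomic_three]
  simp

variable [Fintype F]

theorem card_primitiveRoots_of_dvd_card_sub_one {n : ℕ} (hn : n ∣ Fintype.card F - 1) :
    #(primitiveRoots n F) = n.totient := by
  obtain ⟨g, hg⟩ := IsCyclic.exists_ofOrder_eq_natCard (α := Fˣ)
  rw [Nat.card_units, Nat.card_eq_fintype_card] at hg
  obtain ⟨m, hm⟩ := hn
  have card_pos : 0 < Fintype.card F - 1 := Nat.sub_pos_of_lt Fintype.one_lt_card
  have g_primitive : IsPrimitiveRoot (g : F) (Fintype.card F - 1) :=
    IsPrimitiveRoot.coe_units_iff.mpr (hg ▸ IsPrimitiveRoot.orderOf g)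
  exact (g_primitive.pow card_pos (hm.trans (mul_comm n m))).card_primitiveRoots

theorem primitiveRoots_eq_empty_of_not_dvd_card_sub_one {n : ℕ}
    (hn : ¬ n ∣ Fintype.card F - 1) : primitiveRoots n F = ∅ := by
  refine eq_empty_of_forall_notMem fun ζ hζ => hn ?_
  obtain rfl | n_pos := n.eq_zero_or_pos
  · simp at hζ
  have ζ_primitive := isPrimitiveRoot_of_mem_primitiveRoots hζ
  exact ζ_primitive.dvd_of_pow_eq_one _
    (FiniteField.pow_card_sub_one_eq_one ζ (ζ_primitive.ne_zero n_pos.ne'))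

theorem card_primitiveRoots_three (h3 : (3 : F) ≠ 0) :
    (#(primitiveRoots 3 F) : ℤ) = quadraticChar (ZMod 3) (Fintype.card F) + 1 := by
  have not_dvd : ¬ 3 ∣ Fintype.card F := fun h =>
    not_isUnit_prime_of_dvd_card (R := F) h (isUnit_iff_ne_zero.mpr (mod_cast h3))
  rw [← ZMod.natCast_mod]
  obtain h | h : Fintype.card F % 3 = 1 ∨ Fintype.card F % 3 = 2 := by lia
  · rw [card_primitiveRoots_of_dvd_card_sub_one (by lia), h]
    decide
  · rw [primitiveRoots_eq_empty_of_not_dvd_card_sub_one (by lia), h, card_empty]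
    decide

end PrimitiveRoots

theorem weilIndex_G2_general {F R : Type*} [Field F] [Fintype F] [CommRing R] [IsDomain R]
    (h3 : (3 : F) ≠ 0) {ψ : AddChar F R} (hψ : ψ ≠ 1) :
    ∑ x : F, ∑ y : F, ψ (x ^ 2 - 3 * x * y + 3 * y ^ 2) =
      Fintype.card F * ((quadraticChar (ZMod 3) (Fintype.card F : ZMod 3) : ℤ) : R) := by
  classical
  have hD : (-3 : F) ^ 2 + 4 * -3 ≠ 0 := by
    convert neg_ne_zero.mpr h3 using 1
    ring
  have card_roots : #{t : F | t ^ 2 = -3 * t + -3} = #(primitiveRoots 3 F) := by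
    refine card_equiv (Equiv.addRight 1) fun t => ?_
    rw [mem_primitiveRoots_three_iff h3, mem_filter_univ, ← sub_eq_zero, Equiv.coe_addRight]
    ring_nf
  calc ∑ x : F, ∑ y : F, ψ (x ^ 2 - 3 * x * y + 3 * y ^ 2)
      = ∑ z : QuadraticAlgebra F (-3) (-3), ψ z.norm := by
        rw [sum_quadraticAlgebra]
        refine sum_congr rfl fun x _ => sum_congr rfl fun y _ => congrArg ψ ?_
        rw [QuadraticAlgebra.norm_def]
        ring
    _ = Fintype.card F * ((#(primitiveRoots 3 F) : ℤ) - 1 : ℤ) := by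
        rw [sum_addChar_quadraticAlgebra_norm hψ hD, card_roots]
        push_cast
        rfl
    _ = _ := by rw [card_primitiveRoots_three h3, add_sub_cancel_right]

/-- The Weil index of type `G₂`: `q⁻¹ ∑_{x,y ∈ F} ψ(x² - 3xy + 3y²) = (q/3)`, the Legendre
symbol of `q` modulo `3`. -/
theorem weilIndex_G2 {F : Type*} [Field F] [Fintype F]
    (hp : 3 < ringChar F)
    (ψ : AddChar F ℂ) (hψ : ψ ≠ 1) :
    (Fintype.card F : ℂ)⁻¹ *
        ∑ x : F, ∑ y : F, ψ (x ^ 2 - 3 * x * y + 3 * y ^ 2) =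
      ((quadraticChar (ZMod 3) (Fintype.card F : ZMod 3) : ℤ) : ℂ) := by
  have h3 : ((3 : ℕ) : F) ≠ 0 := CharP.cast_ne_zero_of_ne_of_prime F Nat.prime_three hp.ne'
  rw [weilIndex_G2_general (mod_cast h3) hψ, inv_mul_cancel_left₀ (mod_cast Fintype.card_ne_zero)]
end

section
/- Let F be a finite field of odd cardinality q and ψ : F → ℂ a nontrivial additive character. Let Q_{E₈}(x) = ∑_{i=1}^{8} x_i² − (x₁x₃ + x₃x₄ + x₄x₅ + x₅x₆ + x₆x₇ + x₇x₈ + x₂x₄) (half the quadratic form of the Cartan matrix of type E₈ in Bourbaki numbering). Then ∑_{x ∈ F⁸} ψ(Q_{E₈}(x)) = q⁴. (This is the Weil index γ(E₈) = 1.) -/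
open Finset

/-!
If a nondegenerate quadratic form on a finite vector space has a totally singular subspace `W` of
half the dimension, then `W` is its own orthogonal complement. Summing `ψ (Q v)` over a coset
`x + W` gives `ψ (Q x)` times the sum over `W` of the character `w ↦ ψ (B(w, x))`, which vanishes
unless `x ∈ W`; so the whole sum equals `|W|`.

The form `E₈` has determinant `1`, hence is nondegenerate over every field, and over any ring
containing a solution of `α² + β² + β + 1 = 0` it vanishes on an explicit free submodule of rank
`4`. Such `α` and `β` exist in every finite field.
-/

section GaussSum

open Module LinearMap.BilinForm

variable {F V R : Type*} [Field F] [AddCommGroup V] [Module F V] [CommSemiring R] [IsDomain R]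

lemma sum_addChar_linearMap [Fintype V] {ψ : AddChar F R} (hψ : ψ ≠ 1) (f : V →ₗ[F] F)
    [Decidable (f = 0)] :
    ∑ v, ψ (f v) = if f = 0 then (Fintype.card V : R) else 0 := by
  classical
  have trivial_iff : ψ.compAddMonoidHom f.toAddMonoidHom = 0 ↔ f = 0 := by
    refine ⟨fun h => ?_, fun h => by ext v; simp [h]⟩
    by_contra hf
    obtain ⟨c, hc⟩ := AddChar.ne_one_iff.1 hψ
    obtain ⟨v, rfl⟩ := f.surjective hf c
    exact hc (DFunLike.congr_fun h v)
  simpa only [AddChar.compAddMonoidHom_apply, LinearMap.toAddMonoidHom_coe, trivial_iff] using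
    AddChar.sum_eq_ite (ψ.compAddMonoidHom f.toAddMonoidHom)

theorem sum_addChar_quadraticForm_of_orthogonal_le [Fintype V] {ψ : AddChar F R} (hψ : ψ ≠ 1)
    {Q : QuadraticForm F V} {W : Submodule F V} (hQ : ∀ w ∈ W, Q w = 0)
    (hW : orthogonal Q.polarBilin W ≤ W) :
    ∑ v, ψ (Q v) = (Nat.card W : R) := by
  classical
  obtain ⟨U, hU⟩ := W.exists_isCompl
  let pairing (x : U) : W →ₗ[F] F := Q.polarBilin.flip x ∘ₗ W.subtype
  have pairing_eq_zero_iff (x : U) : pairing x = 0 ↔ x = 0 := by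
    refine ⟨fun h => ?_, fun h => by simp [pairing, h]⟩
    have hx : (x : V) ∈ W := hW fun w hw => LinearMap.congr_fun h ⟨w, hw⟩
    exact Subtype.ext (Submodule.disjoint_def.1 hU.disjoint x hx x.2)
  have sum_coset (x : U) :
      ∑ w : W, ψ (Q (w + x)) = if x = 0 then (Fintype.card W : R) else 0 := by
    have expand (w : W) : Q (w + x) = Q x + pairing x w := by
      rw [QuadraticMap.map_add Q, hQ w w.2, zero_add]; rfl
    simp only [expand, AddChar.map_add_eq_mul, ← mul_sum, sum_addChar_linearMap hψ,
      pairing_eq_zero_iff]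
    split_ifs with hx <;> simp [hx]
  calc ∑ v, ψ (Q v)
      = ∑ p : W × U, ψ (Q (p.1 + p.2)) :=
        ((W.prodEquivOfIsCompl U hU).toEquiv.sum_comp fun v => ψ (Q v)).symm
    _ = ∑ x : U, ∑ w : W, ψ (Q (w + x)) := Fintype.sum_prod_type_right _
    _ = Nat.card W := by simp [sum_coset]

lemma orthogonal_polarBilin_le_of_finrank_eq_two_mul [FiniteDimensional F V]
    {Q : QuadraticForm F V} (hQ : Q.polarBilin.Nondegenerate) {W : Submodule F V}
    (hW : ∀ w ∈ W, Q w = 0) (hdim : finrank F V = 2 * finrank F W) :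
    orthogonal Q.polarBilin W ≤ W := by
  have le_orthogonal : W ≤ orthogonal Q.polarBilin W := fun v hv w hw => by
    simp [QuadraticMap.polar, hW _ (W.add_mem hw hv), hW w hw, hW v hv]
  refine (Submodule.eq_of_le_of_finrank_le le_orthogonal ?_).ge
  rw [finrank_orthogonal hQ]
  lia

theorem sum_addChar_quadraticForm_of_finrank_eq_two_mul [Fintype F] [Fintype V]
    {ψ : AddChar F R} (hψ : ψ ≠ 1) {Q : QuadraticForm F V} (hQ : Q.polarBilin.Nondegenerate)
    {W : Submodule F V} (hW : ∀ w ∈ W, Q w = 0) (hdim : finrank F V = 2 * finrank F W) :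
    ∑ v, ψ (Q v) = (Fintype.card F : R) ^ finrank F W := by
  rw [sum_addChar_quadraticForm_of_orthogonal_le hψ hW
      (orthogonal_polarBilin_le_of_finrank_eq_two_mul hQ hW hdim),
    Module.natCard_eq_pow_finrank (K := F), Nat.card_eq_fintype_card, Nat.cast_pow]

end GaussSum

lemma exists_sq_add_sq_add_self_add_one_eq_zero (F : Type*) [Field F] (p : ℕ) [NeZero p]
    [CharP F p] : ∃ α β : F, α ^ 2 + β ^ 2 + β + 1 = 0 := by
  by_cases h2 : (2 : F) = 0
  · exact ⟨1, 0, by linear_combination h2⟩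
  · obtain ⟨a, b, hab⟩ := CharP.sq_add_sq F p (-3)
    push_cast at hab
    -- Multiplied by 4, the equation reads `(2 * α) ^ 2 + (2 * β + 1) ^ 2 = -3`.
    refine ⟨a / 2, (b - 1) / 2, ?_⟩
    field_simp
    linear_combination hab

section E8

open QuadraticMap (proj)
open scoped Matrix

variable {A : Type*} [CommRing A]

/-- Half the quadratic form of the Cartan matrix of type `E₈`; the coordinate `xᵢ` of the Bourbaki
numbering is `x (i - 1)`. -/
def e8Form (A : Type*) [CommRing A] : QuadraticForm A (Fin 8 → A) :=
  ∑ i, proj i i - (proj 0 2 + proj 2 3 + proj 3 4 + proj 4 5 + proj 5 6 + proj 6 7 + proj 1 3)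

lemma e8Form_apply (x : Fin 8 → A) :
    e8Form A x = (∑ i, x i ^ 2) -
      (x 0 * x 2 + x 2 * x 3 + x 3 * x 4 + x 4 * x 5 + x 5 * x 6 + x 6 * x 7 + x 1 * x 3) := by
  simp [e8Form, sq]

lemma polarBilin_e8Form :
    (e8Form A).polarBilin = (CartanMatrix.E₈.map (Int.castRingHom A)).toBilin' := by
  refine LinearMap.ext₂ fun x y => ?_
  simp only [QuadraticMap.polarBilin_apply_apply, QuadraticMap.polar, e8Form_apply, Pi.add_apply,
    Fin.sum_univ_eight, CartanMatrix.E₈, Int.reduceNeg, Int.coe_castRingHom,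
    Matrix.toBilin'_apply, Matrix.map_apply, Matrix.of_apply, Matrix.cons_val',
    Matrix.cons_val_fin_one, Matrix.cons_val_zero, Matrix.cons_val_one, Matrix.cons_val,
    Int.cast_ofNat, Int.cast_zero, Int.cast_neg, Int.cast_one]
  ring

lemma nondegenerate_polarBilin_e8Form (F : Type*) [Field F] :
    (e8Form F).polarBilin.Nondegenerate := by
  rw [polarBilin_e8Form]
  refine LinearMap.BilinForm.nondegenerate_toBilin'_of_det_ne_zero' _ ?_
  rw [← RingHom.mapMatrix_apply, ← RingHom.map_det, CartanMatrix.E₈_det, map_one]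
  exact one_ne_zero

/-- The matrix whose columns span a totally singular submodule for `e8Form` when
`α ^ 2 + β ^ 2 + β + 1 = 0`; the parameters are the coordinates `x₁, x₄, x₆, x₈`. -/
def e8SingularMatrix (α β : A) : Matrix (Fin 8) (Fin 4) A :=
  -- Completing squares in `x₂, x₃, x₅, x₇` writes `4 * e8Form` as
  -- `(2 * x₃ - x₁ - x₄) ^ 2 + (2 * x₂ - x₄) ^ 2 + (2 * x₅ - x₄ - x₆) ^ 2 + (2 * x₇ - x₆ - x₈) ^ 2`
  -- plus `(x₄ - x₁ - x₆) ^ 2 + (x₆ - x₁ - x₈) ^ 2 + (x₁ - x₈) ^ 2 + x₈ ^ 2`. The rows for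
  -- `x₂, x₃, x₅, x₇` make the first four forms a quaternion multiple of the last four (up to
  -- order and signs), by a quaternion with coordinates `2 * α, 1, 1, 1 + 2 * β`, of norm `-1`.
  !![1, 0, 0, 0;
     1 - α + β, 0, -β, α + β;
     β, -β, 1 + β, α;
     0, 1, 0, 0;
     1 + α + β, 0, 1 - α, α - β;
     0, 0, 1, 0;
     -α, α, -α, 2 + β;
     0, 0, 0, 1]

lemma e8Form_e8SingularMatrix_mulVec {α β : A} (h : α ^ 2 + β ^ 2 + β + 1 = 0) (u : Fin 4 → A) :
    e8Form A (e8SingularMatrix α β *ᵥ u) = 0 := by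
  simp only [e8Form_apply, e8SingularMatrix, Matrix.cons_mulVec, Matrix.empty_mulVec, dotProduct,
    Fin.sum_univ_four, Fin.sum_univ_eight, Matrix.cons_val_zero, Matrix.cons_val_one,
    Matrix.cons_val]
  linear_combination ((u 1 - u 0 - u 2) ^ 2 + (u 2 - u 0 - u 3) ^ 2 + (u 0 - u 3) ^ 2
    + u 3 ^ 2) * h

lemma e8SingularMatrix_mulVec_injective (α β : A) :
    Function.Injective (e8SingularMatrix α β).mulVec := by
  have read_off : Function.LeftInverse (fun x j => x (![0, 3, 5, 7] j))
      (e8SingularMatrix α β).mulVec := fun u => by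
    ext j
    fin_cases j <;> simp [e8SingularMatrix, Matrix.vecHead, Matrix.vecTail]
  exact read_off.injective

end E8

theorem weilIndex_E8_general {F R : Type*} [Field F] [Fintype F] [CommSemiring R] [IsDomain R]
    (ψ : AddChar F R) (hψ : ψ ≠ 1) :
    ∑ x : Fin 8 → F,
        ψ ((∑ i, x i ^ 2) -
            (x 0 * x 2 + x 2 * x 3 + x 3 * x 4 + x 4 * x 5 + x 5 * x 6 + x 6 * x 7
              + x 1 * x 3)) =
      (Fintype.card F : R) ^ 4 := by
  have : NeZero (ringChar F) := ⟨CharP.ringChar_ne_zero_of_finite F⟩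
  obtain ⟨α, β, h⟩ := exists_sq_add_sq_add_self_add_one_eq_zero F (ringChar F)
  let W := LinearMap.range (e8SingularMatrix α β).mulVecLin
  have singular : ∀ w ∈ W, e8Form F w = 0 := by
    rintro _ ⟨u, rfl⟩
    exact e8Form_e8SingularMatrix_mulVec h u
  have finrank_W : Module.finrank F W = 4 := by
    rw [LinearMap.finrank_range_of_inj (e8SingularMatrix_mulVec_injective α β),
      Module.finrank_fin_fun]
  have finrank_eq : Module.finrank F (Fin 8 → F) = 2 * Module.finrank F W := by
    rw [finrank_W, Module.finrank_fin_fun]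
  simpa only [e8Form_apply, finrank_W] using
    sum_addChar_quadraticForm_of_finrank_eq_two_mul hψ (nondegenerate_polarBilin_e8Form F)
      singular finrank_eq

/-- The Weil index of type `E₈` equals `1`: `∑_{x ∈ F⁸} ψ(Q_{E₈}(x)) = q⁴`, where `Q_{E₈}` is
half the quadratic form of the Cartan matrix of type `E₈` (Bourbaki numbering). -/
theorem weilIndex_E8 {F : Type*} [Field F] [Fintype F]
    (hq : Odd (Fintype.card F))
    (ψ : AddChar F ℂ) (hψ : ψ ≠ 1) :
    ∑ x : Fin 8 → F,
        ψ ((∑ i, x i ^ 2) -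
            (x 0 * x 2 + x 2 * x 3 + x 3 * x 4 + x 4 * x 5 + x 5 * x 6 + x 6 * x 7
              + x 1 * x 3)) =
      (Fintype.card F : ℂ) ^ 4 :=
  weilIndex_E8_general ψ hψ
end
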